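/- There exists an ℰ-linear automorphism σ of L of order 12 such that for every point p = [a:b:c] of P²(𝔽₃), with corresponding point root x and line root l of the line {aX + bY + cZ = 0}, one has σ(x) = −ω l and σ(l) = x; moreover σ² is scalar multiplication by −ω. Conjugation by σ preserves G, so the group Q generated by G and σ fits in an exact sequence 1 → PGL₃(𝔽₃) → Q → ℤ/12ℤ → 1, and Q acts transitively and faithfully on the unit multiples of the 26 roots of D. -/

import Mathlib

noncomputable section

open ComplexConjugate

namespace Bimonster

/-- The primitive cube root of unity `ω = e^{2πi/3}`. -/
def ω : ℂ := Complex.exp (2 * (Real.pi : ℂ) * Complex.I / 3)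

/-- `θ = ω - ω̄ = √-3`. -/
def θ : ℂ := ω - conj ω

/-- `ξ = e^{-πi/6}`. -/
def ξ : ℂ := Complex.exp (-((Real.pi : ℂ) * Complex.I) / 6)

/-- Membership in the ring of Eisenstein integers `ℰ = ℤ[ω] ⊆ ℂ`. -/
def EisP (z : ℂ) : Prop := ∃ a b : ℤ, z = (a : ℂ) + (b : ℂ) * ω

/-- The units of the ring of Eisenstein integers. -/
def EisUnit (z : ℂ) : Prop :=
  z = 1 ∨ z = -1 ∨ z = ω ∨ z = -ω ∨ z = ω ^ 2 ∨ z = -ω ^ 2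

/-- The underlying 14-dimensional complex vector space of `L = 3E₈ ⊕ H`. -/
abbrev V : Type := Fin 14 → ℂ

/-- The Hermitian form of `L = 3E₈ ⊕ H`: negative definite standard form on the twelve
`E₈`-coordinates, and the hyperbolic cell with Gram matrix `[[0, θ̄], [θ, 0]]` on the
last two coordinates.  It is conjugate-linear in the first variable. -/
def herm (u v : V) : ℂ :=
  -(∑ i : Fin 12, conj (u (Fin.castLE (by norm_num) i)) * v (Fin.castLE (by norm_num) i)) +
    conj (u 12) * conj θ * v 13 + conj (u 13) * θ * v 12

/-- First generator of the ternary tetracode `𝒞₄ ⊆ 𝔽₃⁴`. -/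
def tet1 : Fin 4 → ℤ := ![1, 1, -1, 0]

/-- Second generator of the ternary tetracode `𝒞₄ ⊆ 𝔽₃⁴`. -/
def tet2 : Fin 4 → ℤ := ![0, 1, 1, 1]

/-- The complex `E₈` lattice: vectors of `ℰ⁴` whose reduction mod `θ` lies in the
ternary tetracode. -/
def inE8 (w : Fin 4 → ℂ) : Prop :=
  (∀ i, EisP (w i)) ∧
    ∃ s t : ℤ, ∀ i : Fin 4, ∃ a b : ℤ,
      w i - ((tet1 i * s + tet2 i * t : ℤ) : ℂ) = θ * ((a : ℂ) + (b : ℂ) * ω)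

/-- The lattice `L = 3E₈ ⊕ H` as a subset of `ℂ¹⁴`. -/
def Lset : Set V :=
  {v | (∀ k : Fin 3,
      inE8 fun i : Fin 4 =>
        v ⟨4 * (k : ℕ) + (i : ℕ), by have hk := k.isLt; have hi := i.isLt; omega⟩) ∧
    EisP (v 12) ∧ EisP (v 13)}

/-- A root of `L`: a primitive lattice vector of norm `-3`. -/
def IsRoot (r : V) : Prop :=
  r ∈ Lset ∧ herm r r = -3 ∧
    ∀ α : ℂ, EisP α → ∀ y ∈ Lset, r = α • y → EisUnit α

/-- The `μ`-reflection in a vector `r`: `v ↦ v − (1−μ)·r·⟨r,v⟩/|r|²`. -/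
def reflMap (μ : ℂ) (r v : V) : V := v - ((1 - μ) * herm r v / herm r r) • r

/-- The automorphism group of the lattice `L`: invertible `ℂ`-linear maps preserving
the lattice and the Hermitian form. -/
def AutL : Subgroup (V ≃ₗ[ℂ] V) where
  carrier := {g | (∀ v : V, v ∈ Lset ↔ g v ∈ Lset) ∧ ∀ u v : V, herm (g u) (g v) = herm u v}
  one_mem' := ⟨fun _ => Iff.rfl, fun _ _ => rfl⟩
  mul_mem' := by
    rintro f g ⟨hf1, hf2⟩ ⟨hg1, hg2⟩
    refine ⟨fun v => ?_, fun u v => ?_⟩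
    · exact (hg1 v).trans (hf1 (g v))
    · exact (hf2 (g u) (g v)).trans (hg2 u v)
  inv_mem' := by
    rintro g ⟨hg1, hg2⟩
    refine ⟨fun v => ?_, fun u v => ?_⟩
    · have h := hg1 (g.symm v)
      have hv : g (g.symm v) = v := g.apply_symm_apply v
      rw [hv] at h
      exact h.symm
    · have h := hg2 (g.symm u) (g.symm v)
      have hu : g (g.symm u) = u := g.apply_symm_apply u
      have hv : g (g.symm v) = v := g.apply_symm_apply v
      rw [hu, hv] at h
      exact h.symm

/-- The set of elements of `Aut(L)` acting as the `ω`-reflection in some root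
belonging to `S`. -/
def ReflAutos (S : Set V) : Set (V ≃ₗ[ℂ] V) :=
  {g | g ∈ AutL ∧ ∃ r ∈ S, ∀ v, g v = reflMap ω r v}

/-- The reflection group `R(L)`: the subgroup of `Aut(L)` generated by the
`ω`-reflections in all roots of `L`. -/
def RL : Subgroup (V ≃ₗ[ℂ] V) := Subgroup.closure (ReflAutos {r | IsRoot r})

/-- Two roots are adjacent when `|⟨a,b⟩| = √3`, i.e. when their `ω`-reflections braid. -/
def Adj (a b : V) : Prop := ‖herm a b‖ = Real.sqrt 3

/-- A set of roots is connected if the graph given by adjacency on it is connected. -/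
def ConnectedSet (Φ : Set V) : Prop :=
  ∀ a ∈ Φ, ∀ b ∈ Φ, Relation.ReflTransGen (fun x y => x ∈ Φ ∧ y ∈ Φ ∧ Adj x y) a b

/-- `Rad Φ` is the radical of a set `Φ` of roots: the closure of `Φ` under reflecting
members of the set in each other (and identification of unit multiples). -/
inductive Rad (Φ : Set V) : V → Prop
  | base {r : V} : r ∈ Φ → Rad Φ r
  | refl {a b : V} : Rad Φ a → Rad Φ b → Rad Φ (reflMap ω a b)
  | inv {a b : V} : Rad Φ a → Rad Φ b → Rad Φ (reflMap (conj ω) a b)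
  | unit {u : ℂ} {r : V} : EisUnit u → Rad Φ r → Rad Φ (u • r)

/-- Shorthand for the entry `-θω²` occurring in the coordinates of the 26 roots. -/
def qc : ℂ := -(θ * ω ^ 2)

/- The 26 roots of the diagram `D` in the coordinate system `3E₈ ⊕ H`. -/

def rA : V := ![0, 0, 0, 0, 0, 0, 0, 0, 0, 0, 0, 0, 1, ω ^ 2]
def rC1 : V := ![qc, 0, 0, 0, 0, 0, 0, 0, 0, 0, 0, 0, 0, 0]
def rC2 : V := ![0, 0, 0, 0, qc, 0, 0, 0, 0, 0, 0, 0, 0, 0]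
def rC3 : V := ![0, 0, 0, 0, 0, 0, 0, 0, qc, 0, 0, 0, 0, 0]
def rE1 : V := ![0, qc, 0, 0, 0, 0, 0, 0, 0, 0, 0, 0, 0, 0]
def rE2 : V := ![0, 0, 0, 0, 0, qc, 0, 0, 0, 0, 0, 0, 0, 0]
def rE3 : V := ![0, 0, 0, 0, 0, 0, 0, 0, 0, qc, 0, 0, 0, 0]
def rA1 : V := ![0, 0, 0, 0, 0, 0, 0, qc, 0, 0, 0, qc, ω, ω ^ 2]
def rA2 : V := ![0, 0, 0, qc, 0, 0, 0, 0, 0, 0, 0, qc, ω, ω ^ 2]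
def rA3 : V := ![0, 0, 0, qc, 0, 0, 0, qc, 0, 0, 0, 0, ω, ω ^ 2]
def rG1 : V := ![0, 0, 0, qc, 0, 0, -qc, qc, 0, 0, -qc, qc, 2 * ω, 2 * ω ^ 2]
def rG2 : V := ![0, 0, -qc, qc, 0, 0, 0, qc, 0, 0, -qc, qc, 2 * ω, 2 * ω ^ 2]
def rG3 : V := ![0, 0, -qc, qc, 0, 0, -qc, qc, 0, 0, 0, qc, 2 * ω, 2 * ω ^ 2]
def rF : V := ![0, 1, 1, -2, 0, 1, 1, -2, 0, 1, 1, -2, -2 + ω, -θ]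
def rB1 : V := ![1, 0, 1, -1, 0, 0, 0, 0, 0, 0, 0, 0, -1, 0]
def rB2 : V := ![0, 0, 0, 0, 1, 0, 1, -1, 0, 0, 0, 0, -1, 0]
def rB3 : V := ![0, 0, 0, 0, 0, 0, 0, 0, 1, 0, 1, -1, -1, 0]
def rD1 : V := ![1, 1, -1, 0, 0, 0, 0, 0, 0, 0, 0, 0, 0, 0]
def rD2 : V := ![0, 0, 0, 0, 1, 1, -1, 0, 0, 0, 0, 0, 0, 0]
def rD3 : V := ![0, 0, 0, 0, 0, 0, 0, 0, 1, 1, -1, 0, 0, 0]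
def rF1 : V := ![0, 1, 1, 1, 0, 0, 0, 0, 0, 0, 0, 0, 0, 0]
def rF2 : V := ![0, 0, 0, 0, 0, 1, 1, 1, 0, 0, 0, 0, 0, 0]
def rF3 : V := ![0, 0, 0, 0, 0, 0, 0, 0, 0, 1, 1, 1, 0, 0]
def rZ1 : V := ![0, 1, 1, -2, 1, 0, 1, -1, 1, 0, 1, -1, qc, -θ]
def rZ2 : V := ![1, 0, 1, -1, 0, 1, 1, -2, 1, 0, 1, -1, qc, -θ]
def rZ3 : V := ![1, 0, 1, -1, 1, 0, 1, -1, 0, 1, 1, -2, qc, -θ]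

/-- The 13 roots of `D` labelled by the points of `P²(𝔽₃)`. -/
def pt : Fin 13 → V :=
  ![rA, rC1, rC2, rC3, rE1, rE2, rE3, rA1, rA2, rA3, rG1, rG2, rG3]

/-- The 13 roots of `D` labelled by the lines of `P²(𝔽₃)`. -/
def lnr : Fin 13 → V :=
  ![rF, rB1, rB2, rB3, rD1, rD2, rD3, rF1, rF2, rF3, rZ1, rZ2, rZ3]

/-- The 26 roots of the diagram `D` (the incidence graph of `P²(𝔽₃)`). -/
def D26 : Set V := Set.range pt ∪ Set.range lnr

/-- The 16 roots forming the `M₆₆₆` diagram. -/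
def M16 : Set V :=
  Set.range
    (![rA, rB1, rB2, rB3, rC1, rC2, rC3, rD1, rD2, rD3, rE1, rE2, rE3, rF1, rF2, rF3] :
      Fin 16 → V)

/-- The 26 vectors `(ρ₁,…,ρ₂₆) = (x₁,…,x₁₃, ξl₁,…,ξl₁₃)`. -/
def ρv : Fin 26 → V := fun i =>
  if h : (i : ℕ) < 13 then pt ⟨(i : ℕ), h⟩
  else ξ • lnr ⟨(i : ℕ) - 13, by have := i.isLt; omega⟩

/-- The Weyl vector `ρ̄ = (Σ points + ξ Σ lines)/26`. -/
def ρbar : V := (26 : ℂ)⁻¹ • ((∑ i : Fin 13, pt i) + ξ • ∑ i : Fin 13, lnr i)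

/-- The height of a root: `ht(r) = |⟨ρ̄, r⟩| / |ρ̄|²`. -/
def ht (r : V) : ℝ := ‖herm ρbar r‖ / ‖herm ρbar ρbar‖

/-- The subgroup `G ≅ PGL₃(𝔽₃)` of `Aut(L)`: automorphisms of `L` preserving the set
of 13 point roots and the set of 13 line roots of the diagram `D`. -/
def Gsub : Subgroup (V ≃ₗ[ℂ] V) where
  carrier := {g | g ∈ AutL ∧ (⇑g) '' Set.range pt = Set.range pt ∧
    (⇑g) '' Set.range lnr = Set.range lnr}
  one_mem' := by
    refine ⟨one_mem AutL, ?_, ?_⟩ <;> simp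
  mul_mem' := by
    rintro f g ⟨hf0, hf1, hf2⟩ ⟨hg0, hg1, hg2⟩
    refine ⟨mul_mem hf0 hg0, ?_, ?_⟩
    · have hco : (⇑(f * g)) = (⇑f) ∘ (⇑g) := rfl
      rw [hco, Set.image_comp, hg1, hf1]
    · have hco : (⇑(f * g)) = (⇑f) ∘ (⇑g) := rfl
      rw [hco, Set.image_comp, hg2, hf2]
  inv_mem' := by
    rintro g ⟨hg0, hg1, hg2⟩
    refine ⟨inv_mem hg0, ?_, ?_⟩
    · conv_lhs => rw [← hg1]
      rw [← Set.image_comp]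
      have : (⇑g⁻¹ ∘ ⇑g) = id := by
        funext x; exact g.symm_apply_apply x
      rw [this, Set.image_id]
    · conv_lhs => rw [← hg2]
      rw [← Set.image_comp]
      have : (⇑g⁻¹ ∘ ⇑g) = id := by
        funext x; exact g.symm_apply_apply x
      rw [this, Set.image_id]

/-- The defining properties of the automorphism `σ`: it is an automorphism of `L`
which, for the polarity `δ` of `P²(𝔽₃)` pairing each point `x = [a:b:c]` with the
line `l = {aX+bY+cZ = 0}`, sends the point root `x` to `-ω·l` and the line root `l`
to `x`. -/
def SigmaSpec (σ : V ≃ₗ[ℂ] V) : Prop :=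
  σ ∈ AutL ∧ ∃ δ : Fin 13 ≃ Fin 13,
    (∀ i j, Adj (pt i) (lnr (δ j)) ↔ Adj (pt j) (lnr (δ i))) ∧
    (∀ i, σ (pt i) = (-ω) • lnr (δ i)) ∧
    (∀ i, σ (lnr (δ i)) = pt i)

/-- The group `Q` generated by `G` and `σ`. -/
def QGroup (σ : V ≃ₗ[ℂ] V) : Subgroup (V ≃ₗ[ℂ] V) :=
  Subgroup.closure ({σ} ∪ (Gsub : Set (V ≃ₗ[ℂ] V)))

/-- The projective general linear group `PGL₃(𝔽₃)`. -/
abbrev PGL3F3 : Type :=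
  Matrix.GeneralLinearGroup (Fin 3) (ZMod 3) ⧸
    Subgroup.center (Matrix.GeneralLinearGroup (Fin 3) (ZMod 3))

/-- The unit multiples of the 26 roots of `D`. -/
def UnitRoots : Set V := {w | ∃ u : ℂ, EisUnit u ∧ ∃ r ∈ D26, w = u • r}

/-! ### Arithmetic of `ω` -/

lemma ω_eq : ω = -1 / 2 + (Real.sqrt 3 / 2 : ℝ) * Complex.I := by
  have h : (2 * (Real.pi : ℂ) * Complex.I / 3) = ((Real.pi - Real.pi / 3 : ℝ) : ℂ) * Complex.I := by
    push_cast; ring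
  rw [ω, h, Complex.exp_mul_I, ← Complex.ofReal_cos, ← Complex.ofReal_sin, Real.cos_pi_sub,
    Real.sin_pi_sub, Real.cos_pi_div_three, Real.sin_pi_div_three]
  push_cast; ring

lemma conj_ω : conj ω = -1 - ω := by
  rw [ω_eq]
  simp only [map_add, map_mul, map_div₀, map_neg, map_one, Complex.conj_ofNat, Complex.conj_ofReal,
    Complex.conj_I]
  ring

lemma ω_sq : ω ^ 2 = -1 - ω := by
  have h3 : ((Real.sqrt 3 : ℝ) : ℂ) ^ 2 = 3 := by
    rw [← Complex.ofReal_pow, Real.sq_sqrt (by norm_num)]; norm_num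
  rw [ω_eq]; push_cast
  linear_combination (Complex.I ^ 2 / 4) * h3 + (3 / 4) * Complex.I_sq

lemma ω_ne_zero : ω ≠ 0 := Complex.exp_ne_zero _

lemma θ_eq : θ = 1 + 2 * ω := by rw [θ, conj_ω]; ring

lemma qc_eq : qc = -1 + ω := by
  rw [qc, θ_eq]; linear_combination (-2 * ω - 1) * ω_sq + (2:ℂ) * ω_sq - 2 * ω_sq + 2 * ω_sq

lemma θ_sq : θ ^ 2 = -3 := by
  rw [θ_eq]; linear_combination 4 * ω_sq

lemma θ_ne_zero : θ ≠ 0 := by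
  intro h; have := θ_sq; rw [h] at this; norm_num at this

lemma ω_im : ω.im = Real.sqrt 3 / 2 := by rw [ω_eq]; simp

lemma ω_re : ω.re = -1 / 2 := by rw [ω_eq]; simp

/-! ### A computable model of Eisenstein integers -/

/-- The Eisenstein integer `a + b ω` attached to a pair `(a, b)`. -/
def toC (p : ℤ × ℤ) : ℂ := (p.1 : ℂ) + (p.2 : ℂ) * ω

/-- Multiplication of pairs. -/
def emul (p q : ℤ × ℤ) : ℤ × ℤ := (p.1 * q.1 - p.2 * q.2, p.1 * q.2 + p.2 * q.1 - p.2 * q.2)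

/-- Conjugation of pairs. -/
def econj (p : ℤ × ℤ) : ℤ × ℤ := (p.1 - p.2, -p.2)

lemma toC_mul (p q : ℤ × ℤ) : toC (emul p q) = toC p * toC q := by
  simp only [toC, emul]; push_cast; linear_combination (-(p.2 * q.2) : ℂ) * ω_sq

lemma toC_conj (p : ℤ × ℤ) : toC (econj p) = conj (toC p) := by
  simp only [toC, econj, map_add, map_mul, conj_ω, map_intCast]; push_cast; ring

lemma toC_add (p q : ℤ × ℤ) : toC (p + q) = toC p + toC q := by
  simp only [toC, Prod.fst_add, Prod.snd_add]; push_cast; ring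

lemma toC_neg (p : ℤ × ℤ) : toC (-p) = -toC p := by
  simp only [toC, Prod.fst_neg, Prod.snd_neg]; push_cast; ring

lemma toC_zero : toC 0 = 0 := by simp [toC]

/-- `toC` as an additive homomorphism. -/
def toCHom : ℤ × ℤ →+ ℂ where
  toFun := toC
  map_zero' := toC_zero
  map_add' := toC_add

/-- The Hermitian form in integer coordinates. -/
def hermZ (u v : Fin 14 → ℤ × ℤ) : ℤ × ℤ :=
  -(∑ i : Fin 12, emul (econj (u (Fin.castLE (by norm_num) i))) (v (Fin.castLE (by norm_num) i))) +
    emul (emul (econj (u 12)) (-1, -2)) (v 13) + emul (emul (econj (u 13)) (1, 2)) (v 12)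

lemma toC_herm (u v : Fin 14 → ℤ × ℤ) :
    herm (fun k => toC (u k)) (fun k => toC (v k)) = toC (hermZ u v) := by
  have hs : ∀ f : Fin 12 → ℤ × ℤ, toC (∑ i, f i) = ∑ i, toC (f i) := fun f => map_sum toCHom f _
  have h1 : toC (1, 2) = θ := by rw [θ_eq]; simp [toC]
  have h2 : toC (-1, -2) = conj θ := by rw [θ_eq]; simp [toC, conj_ω, Complex.conj_ofNat]; ring
  simp only [hermZ, toC_add, toC_neg, hs, toC_mul, toC_conj, h1, h2, herm]

/-- Integer coordinates of the point roots. -/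
def ptZ : Fin 13 → Fin 14 → ℤ × ℤ :=
  ![![(0, 0), (0, 0), (0, 0), (0, 0), (0, 0), (0, 0), (0, 0), (0, 0), (0, 0), (0, 0), (0, 0), (0, 0), (1, 0), (-1, -1)],
    ![(-1, 1), (0, 0), (0, 0), (0, 0), (0, 0), (0, 0), (0, 0), (0, 0), (0, 0), (0, 0), (0, 0), (0, 0), (0, 0), (0, 0)],
    ![(0, 0), (0, 0), (0, 0), (0, 0), (-1, 1), (0, 0), (0, 0), (0, 0), (0, 0), (0, 0), (0, 0), (0, 0), (0, 0), (0, 0)],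
    ![(0, 0), (0, 0), (0, 0), (0, 0), (0, 0), (0, 0), (0, 0), (0, 0), (-1, 1), (0, 0), (0, 0), (0, 0), (0, 0), (0, 0)],
    ![(0, 0), (-1, 1), (0, 0), (0, 0), (0, 0), (0, 0), (0, 0), (0, 0), (0, 0), (0, 0), (0, 0), (0, 0), (0, 0), (0, 0)],
    ![(0, 0), (0, 0), (0, 0), (0, 0), (0, 0), (-1, 1), (0, 0), (0, 0), (0, 0), (0, 0), (0, 0), (0, 0), (0, 0), (0, 0)],
    ![(0, 0), (0, 0), (0, 0), (0, 0), (0, 0), (0, 0), (0, 0), (0, 0), (0, 0), (-1, 1), (0, 0), (0, 0), (0, 0), (0, 0)],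
    ![(0, 0), (0, 0), (0, 0), (0, 0), (0, 0), (0, 0), (0, 0), (-1, 1), (0, 0), (0, 0), (0, 0), (-1, 1), (0, 1), (-1, -1)],
    ![(0, 0), (0, 0), (0, 0), (-1, 1), (0, 0), (0, 0), (0, 0), (0, 0), (0, 0), (0, 0), (0, 0), (-1, 1), (0, 1), (-1, -1)],
    ![(0, 0), (0, 0), (0, 0), (-1, 1), (0, 0), (0, 0), (0, 0), (-1, 1), (0, 0), (0, 0), (0, 0), (0, 0), (0, 1), (-1, -1)],
    ![(0, 0), (0, 0), (0, 0), (-1, 1), (0, 0), (0, 0), (1, -1), (-1, 1), (0, 0), (0, 0), (1, -1), (-1, 1), (0, 2), (-2, -2)],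
    ![(0, 0), (0, 0), (1, -1), (-1, 1), (0, 0), (0, 0), (0, 0), (-1, 1), (0, 0), (0, 0), (1, -1), (-1, 1), (0, 2), (-2, -2)],
    ![(0, 0), (0, 0), (1, -1), (-1, 1), (0, 0), (0, 0), (1, -1), (-1, 1), (0, 0), (0, 0), (0, 0), (-1, 1), (0, 2), (-2, -2)]]

/-- Integer coordinates of the line roots. -/
def lnZ : Fin 13 → Fin 14 → ℤ × ℤ :=
  ![![(0, 0), (1, 0), (1, 0), (-2, 0), (0, 0), (1, 0), (1, 0), (-2, 0), (0, 0), (1, 0), (1, 0), (-2, 0), (-2, 1), (-1, -2)],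
    ![(1, 0), (0, 0), (1, 0), (-1, 0), (0, 0), (0, 0), (0, 0), (0, 0), (0, 0), (0, 0), (0, 0), (0, 0), (-1, 0), (0, 0)],
    ![(0, 0), (0, 0), (0, 0), (0, 0), (1, 0), (0, 0), (1, 0), (-1, 0), (0, 0), (0, 0), (0, 0), (0, 0), (-1, 0), (0, 0)],
    ![(0, 0), (0, 0), (0, 0), (0, 0), (0, 0), (0, 0), (0, 0), (0, 0), (1, 0), (0, 0), (1, 0), (-1, 0), (-1, 0), (0, 0)],
    ![(1, 0), (1, 0), (-1, 0), (0, 0), (0, 0), (0, 0), (0, 0), (0, 0), (0, 0), (0, 0), (0, 0), (0, 0), (0, 0), (0, 0)],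
    ![(0, 0), (0, 0), (0, 0), (0, 0), (1, 0), (1, 0), (-1, 0), (0, 0), (0, 0), (0, 0), (0, 0), (0, 0), (0, 0), (0, 0)],
    ![(0, 0), (0, 0), (0, 0), (0, 0), (0, 0), (0, 0), (0, 0), (0, 0), (1, 0), (1, 0), (-1, 0), (0, 0), (0, 0), (0, 0)],
    ![(0, 0), (1, 0), (1, 0), (1, 0), (0, 0), (0, 0), (0, 0), (0, 0), (0, 0), (0, 0), (0, 0), (0, 0), (0, 0), (0, 0)],
    ![(0, 0), (0, 0), (0, 0), (0, 0), (0, 0), (1, 0), (1, 0), (1, 0), (0, 0), (0, 0), (0, 0), (0, 0), (0, 0), (0, 0)],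
    ![(0, 0), (0, 0), (0, 0), (0, 0), (0, 0), (0, 0), (0, 0), (0, 0), (0, 0), (1, 0), (1, 0), (1, 0), (0, 0), (0, 0)],
    ![(0, 0), (1, 0), (1, 0), (-2, 0), (1, 0), (0, 0), (1, 0), (-1, 0), (1, 0), (0, 0), (1, 0), (-1, 0), (-1, 1), (-1, -2)],
    ![(1, 0), (0, 0), (1, 0), (-1, 0), (0, 0), (1, 0), (1, 0), (-2, 0), (1, 0), (0, 0), (1, 0), (-1, 0), (-1, 1), (-1, -2)],
    ![(1, 0), (0, 0), (1, 0), (-1, 0), (1, 0), (0, 0), (1, 0), (-1, 0), (0, 0), (1, 0), (1, 0), (-2, 0), (-1, 1), (-1, -2)]]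

/-- Homogeneous coordinates of the points. -/
def pv : Fin 13 → Fin 3 → ZMod 3 :=
  ![![1, 0, 0], ![0, 1, 0], ![0, 0, 1], ![1, 1, 1], ![1, 1, 2], ![1, 2, 1], ![0, 1, 2], ![1, 1, 0], ![1, 0, 1], ![0, 1, 1], ![1, 2, 0], ![1, 0, 2], ![1, 2, 2]]

/-- Homogeneous coordinates of the lines. -/
def lv : Fin 13 → Fin 3 → ZMod 3 :=
  ![![0, 1, 1], ![0, 0, 1], ![0, 1, 0], ![0, 1, 2], ![1, 0, 1], ![1, 1, 0], ![1, 1, 1], ![1, 1, 2], ![1, 2, 1], ![1, 2, 2], ![1, 2, 0], ![1, 0, 2], ![1, 0, 0]]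


lemma pt_eq (i : Fin 13) : pt i = fun k => toC (ptZ i k) := by
  funext k
  fin_cases i <;> fin_cases k <;>
    simp [pt, ptZ, toC, rA, rC1, rC2, rC3, rE1, rE2, rE3, rA1, rA2, rA3, rG1, rG2, rG3, qc_eq,
      ω_sq] <;> ring

lemma lnr_eq (i : Fin 13) : lnr i = fun k => toC (lnZ i k) := by
  funext k
  fin_cases i <;> fin_cases k <;>
    simp [lnr, lnZ, toC, rF, rB1, rB2, rB3, rD1, rD2, rD3, rF1, rF2, rF3, rZ1, rZ2, rZ3, qc_eq,
      θ_eq] <;> ring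

/-- Incidence of points and lines of the projective plane. -/
def Inc (i j : Fin 13) : Prop := pv i ⬝ᵥ lv j = 0

instance (i j : Fin 13) : Decidable (Inc i j) := inferInstanceAs (Decidable (_ = _))

set_option maxRecDepth 100000 in
lemma hermZ_pp : ∀ i j : Fin 13, hermZ (ptZ i) (ptZ j) = if i = j then (-3, 0) else (0, 0) := by
  decide +kernel

set_option maxRecDepth 100000 in
lemma hermZ_ll : ∀ i j : Fin 13, hermZ (lnZ i) (lnZ j) = if i = j then (-3, 0) else (0, 0) := by
  decide +kernel

set_option maxRecDepth 100000 in
lemma hermZ_pl : ∀ i j : Fin 13, hermZ (ptZ i) (lnZ j) = if Inc i j then (2, 1) else (0, 0) := by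
  decide +kernel

set_option maxRecDepth 100000 in
lemma hermZ_lp : ∀ i j : Fin 13, hermZ (lnZ i) (ptZ j) = if Inc j i then (1, -1) else (0, 0) := by
  decide +kernel

lemma herm_pp (i j : Fin 13) : herm (pt i) (pt j) = if i = j then -3 else 0 := by
  rw [pt_eq, pt_eq, toC_herm, hermZ_pp]; split_ifs <;> simp [toC]

lemma herm_ll (i j : Fin 13) : herm (lnr i) (lnr j) = if i = j then -3 else 0 := by
  rw [lnr_eq, lnr_eq, toC_herm, hermZ_ll]; split_ifs <;> simp [toC]

lemma herm_pl (i j : Fin 13) : herm (pt i) (lnr j) = if Inc i j then 2 + ω else 0 := by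
  rw [lnr_eq, pt_eq, toC_herm, hermZ_pl]; split_ifs <;> simp [toC]

lemma herm_lp (i j : Fin 13) : herm (lnr i) (pt j) = if Inc j i then 1 - ω else 0 := by
  rw [lnr_eq, pt_eq, toC_herm, hermZ_lp]; split_ifs <;> simp [toC, sub_eq_add_neg]

lemma adj_iff (i j : Fin 13) : Adj (pt i) (lnr j) ↔ Inc i j := by
  have h3 : 0 < Real.sqrt 3 := Real.sqrt_pos.2 (by norm_num)
  rw [Adj, herm_pl]
  split_ifs with h
  · simp only [h, iff_true]
    rw [Complex.norm_def]
    congr 1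
    rw [Complex.normSq_apply]
    simp only [Complex.add_re, Complex.add_im, ω_re, ω_im, Complex.re_ofNat, Complex.im_ofNat]
    nlinarith [Real.sq_sqrt (show (0:ℝ) ≤ 3 by norm_num)]
  · simp only [h, norm_zero, iff_false]; exact h3.ne

/-! ### The Hermitian form -/

lemma herm_add_right (u v w : V) : herm u (v + w) = herm u v + herm u w := by
  simp only [herm, Pi.add_apply, mul_add, Finset.sum_add_distrib]; ring

lemma herm_smul_right (u v : V) (c : ℂ) : herm u (c • v) = c * herm u v := by
  have : ∑ i : Fin 12, conj (u (Fin.castLE (by norm_num) i)) *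
      (c * v (Fin.castLE (by norm_num) i)) = c * ∑ i : Fin 12,
      conj (u (Fin.castLE (by norm_num) i)) * v (Fin.castLE (by norm_num) i) := by
    rw [Finset.mul_sum]; exact Finset.sum_congr rfl fun i _ => by ring
  simp only [herm, Pi.smul_apply, smul_eq_mul, this]; ring

lemma herm_conj (u v : V) : conj (herm u v) = herm v u := by
  have : ∀ i : Fin 12, u (Fin.castLE (by norm_num) i) * conj (v (Fin.castLE (by norm_num) i))
      = conj (v (Fin.castLE (by norm_num) i)) * u (Fin.castLE (by norm_num) i) :=
    fun i => mul_comm _ _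
  simp only [herm, map_add, map_neg, map_sum, map_mul, Complex.conj_conj, this]; ring

/-- The form as a linear map in its second argument. -/
def hermR (u : V) : V →ₗ[ℂ] ℂ where
  toFun := herm u
  map_add' := herm_add_right u
  map_smul' c v := herm_smul_right u v c

lemma herm_smul_left (u v : V) (c : ℂ) : herm (c • u) v = conj c * herm u v := by
  rw [← herm_conj, herm_smul_right, map_mul, herm_conj]

lemma herm_sum_right {I : Type} [Fintype I] (u : V) (c : I → ℂ) (r : I → V) :
    herm u (∑ i, c i • r i) = ∑ i, c i * herm u (r i) := by
  have h := map_sum (hermR u) (fun i => c i • r i) Finset.univ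
  simp only [map_smul, smul_eq_mul] at h
  exact h

lemma herm_lin {I : Type} [Fintype I] (c d : I → ℂ) (r : I → V) :
    herm (∑ i, c i • r i) (∑ i, d i • r i) =
      ∑ i, ∑ j, conj (c i) * d j * herm (r i) (r j) := by
  rw [herm_sum_right, Finset.sum_comm]
  refine Finset.sum_congr rfl fun j _ => ?_
  rw [← herm_conj, herm_sum_right, map_sum, Finset.mul_sum]
  refine Finset.sum_congr rfl fun i _ => ?_
  rw [map_mul, herm_conj]; ring

lemma herm_nondeg (v : V) (h : ∀ u, herm u v = 0) : v = 0 := by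
  have h12 : ∀ i : Fin 12, v (Fin.castLE (by norm_num) i) = 0 := by
    intro i
    have hi := h (Pi.single (Fin.castLE (by norm_num) i) 1)
    have e1 : (Fin.castLE (by norm_num) i : Fin 14) ≠ 12 := by
      intro h; have := congrArg Fin.val h; simp at this; omega
    have e2 : (Fin.castLE (by norm_num) i : Fin 14) ≠ 13 := by
      intro h; have := congrArg Fin.val h; simp at this; omega
    simp only [herm, Pi.single_apply, e1.symm, e2.symm, if_false, map_zero, zero_mul, add_zero,
      Fin.castLE_inj, apply_ite conj, map_one, ite_mul, one_mul] at hi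
    simpa using hi
  have h13 : v 13 = 0 := by
    have hi := h (Pi.single 12 1)
    simp only [herm, h12] at hi
    simpa [θ_ne_zero] using hi
  have h12' : v 12 = 0 := by
    have hi := h (Pi.single 13 1)
    simp only [herm, h12] at hi
    simpa [θ_ne_zero] using hi
  funext k
  by_cases hk : (k : ℕ) < 12
  · exact h12 ⟨k, hk⟩
  · have : k = 12 ∨ k = 13 := by
      have := k.isLt
      simp only [Fin.ext_iff]
      simp; omega
    rcases this with rfl | rfl
    · exact h12'
    · exact h13

/-! ### The lattice as a module over the Eisenstein integers -/

lemma EisP.toC (p : ℤ × ℤ) : EisP (toC p) := ⟨p.1, p.2, rfl⟩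

lemma EisP.exists_toC {z : ℂ} (h : EisP z) : ∃ p, z = Bimonster.toC p := by
  obtain ⟨a, b, rfl⟩ := h; exact ⟨(a, b), rfl⟩

lemma EisP.add {x y : ℂ} (hx : EisP x) (hy : EisP y) : EisP (x + y) := by
  obtain ⟨p, rfl⟩ := hx.exists_toC
  obtain ⟨q, rfl⟩ := hy.exists_toC
  rw [← toC_add]; exact EisP.toC _

lemma EisP.mul {x y : ℂ} (hx : EisP x) (hy : EisP y) : EisP (x * y) := by
  obtain ⟨p, rfl⟩ := hx.exists_toC
  obtain ⟨q, rfl⟩ := hy.exists_toC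
  rw [← toC_mul]; exact EisP.toC _

lemma EisP.neg {x : ℂ} (hx : EisP x) : EisP (-x) := by
  obtain ⟨p, rfl⟩ := hx.exists_toC
  rw [← toC_neg]; exact EisP.toC _

lemma EisP.int (n : ℤ) : EisP (n : ℂ) := ⟨n, 0, by simp⟩

lemma EisP.one : EisP 1 := ⟨1, 0, by simp⟩

lemma EisP.zero : EisP 0 := ⟨0, 0, by simp⟩

lemma EisP.om : EisP ω := ⟨0, 1, by simp⟩

lemma EisP.th : EisP θ := ⟨1, 2, by rw [θ_eq]; simp⟩

/-- The ring of Eisenstein integers. -/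
def ES : Subring ℂ where
  carrier := {z | EisP z}
  mul_mem' := EisP.mul
  one_mem' := EisP.one
  add_mem' := EisP.add
  zero_mem' := EisP.zero
  neg_mem' := EisP.neg

lemma inE8_iff (w : Fin 4 → ℂ) : inE8 w ↔ ∃ s t : ℤ, ∃ x : Fin 4 → ℂ, (∀ i, EisP (x i)) ∧
    ∀ i, w i = tet1 i * s + tet2 i * t + θ * x i := by
  constructor
  · rintro ⟨-, s, t, h⟩
    choose a b h using h
    refine ⟨s, t, fun i => a i + b i * ω, fun i => ⟨a i, b i, rfl⟩, fun i => ?_⟩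
    have := h i
    push_cast at this
    linear_combination this
  · rintro ⟨s, t, x, hx, h⟩
    refine ⟨fun i => ?_, s, t, fun i => ?_⟩
    · rw [h i]
      exact (((EisP.int _).mul (EisP.int _)).add ((EisP.int _).mul (EisP.int _))).add
        (EisP.th.mul (hx i))
    · obtain ⟨a, b, hab⟩ := hx i
      refine ⟨a, b, ?_⟩
      rw [← hab, h i]; push_cast; ring

lemma inE8.add {v w : Fin 4 → ℂ} (hv : inE8 v) (hw : inE8 w) : inE8 (fun i => v i + w i) := by
  rw [inE8_iff] at *
  obtain ⟨s, t, x, hx, h⟩ := hv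
  obtain ⟨s', t', x', hx', h'⟩ := hw
  refine ⟨s + s', t + t', fun i => x i + x' i, fun i => (hx i).add (hx' i), fun i => ?_⟩
  rw [h, h']; push_cast; ring

lemma inE8.smul {w : Fin 4 → ℂ} {z : ℂ} (hz : EisP z) (hw : inE8 w) :
    inE8 (fun i => z * w i) := by
  rw [inE8_iff] at *
  obtain ⟨s, t, x, hx, h⟩ := hw
  have hz0 := hz
  obtain ⟨a, b, rfl⟩ := hz0
  refine ⟨(a + b) * s, (a + b) * t,
    fun i => (b * (1 + ω)) * (tet1 i * s + tet2 i * t) + (a + b * ω) * x i, fun i => ?_,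
    fun i => ?_⟩
  · exact (((EisP.int _).mul (EisP.one.add EisP.om)).mul
      (((EisP.int _).mul (EisP.int _)).add ((EisP.int _).mul (EisP.int _)))).add (hz.mul (hx i))
  · rw [h, θ_eq]; push_cast
    linear_combination (-2 * b * (tet1 i * s + tet2 i * t) : ℂ) * ω_sq

/-- The lattice `L` as a module over the Eisenstein integers. -/
def LM : Submodule ES V where
  carrier := Lset
  add_mem' := by
    rintro v w ⟨h1, h2, h3⟩ ⟨h1', h2', h3'⟩
    exact ⟨fun k => (h1 k).add (h1' k), h2.add h2', h3.add h3'⟩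
  zero_mem' := by
    refine ⟨fun k => ?_, EisP.zero, EisP.zero⟩
    rw [inE8_iff]
    exact ⟨0, 0, 0, fun i => EisP.zero, fun i => by simp⟩
  smul_mem' := by
    rintro ⟨c, hc⟩ v ⟨h1, h2, h3⟩
    exact ⟨fun k => (h1 k).smul hc, EisP.mul hc h2, EisP.mul hc h3⟩

/-- Decidable criterion for membership in the lattice. -/
def chk (u : Fin 14 → ℤ × ℤ) (p q r s : Fin 14) : Prop :=
  (3 : ℤ) ∣ ((u q).1 + (u q).2) - ((u p).1 + (u p).2) - ((u s).1 + (u s).2) ∧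
  (3 : ℤ) ∣ ((u r).1 + (u r).2) - ((u s).1 + (u s).2) + ((u p).1 + (u p).2)

instance (u : Fin 14 → ℤ × ℤ) (p q r s : Fin 14) : Decidable (chk u p q r s) :=
  inferInstanceAs (Decidable (_ ∧ _))

lemma chk_inE8 {u : Fin 14 → ℤ × ℤ} {p q r s : Fin 14} (h : chk u p q r s) :
    inE8 ![toC (u p), toC (u q), toC (u r), toC (u s)] := by
  obtain ⟨⟨m, hm⟩, ⟨n, hn⟩⟩ := h
  have hm' : ((u q).1 : ℂ) = ((u p).1 + (u p).2) + ((u s).1 + (u s).2) - (u q).2 + 3 * m := by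
    have : (u q).1 = ((u p).1 + (u p).2) + ((u s).1 + (u s).2) - (u q).2 + 3 * m := by linarith
    exact_mod_cast this
  have hn' : ((u r).1 : ℂ) = ((u s).1 + (u s).2) - ((u p).1 + (u p).2) - (u r).2 + 3 * n := by
    have : (u r).1 = ((u s).1 + (u s).2) - ((u p).1 + (u p).2) - (u r).2 + 3 * n := by linarith
    exact_mod_cast this
  rw [inE8_iff]
  refine ⟨(u p).1 + (u p).2, (u s).1 + (u s).2, ![toC ((u p).2, (u p).2),
    toC ((u q).2 - m, (u q).2 - 2 * m), toC ((u r).2 - n, (u r).2 - 2 * n),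
    toC ((u s).2, (u s).2)], fun i => ?_, fun i => ?_⟩
  · fin_cases i <;> exact EisP.toC _
  · fin_cases i <;> simp [tet1, tet2, toC, θ_eq]
    · linear_combination (-2 * (u p).2 : ℂ) * ω_sq
    · linear_combination hm' + (-2 * ((u q).2 - 2 * m) : ℂ) * ω_sq
    · linear_combination hn' + (-2 * ((u r).2 - 2 * n) : ℂ) * ω_sq
    · linear_combination (-2 * (u s).2 : ℂ) * ω_sq

lemma chk_Lset {u : Fin 14 → ℤ × ℤ} (h0 : chk u 0 1 2 3) (h1 : chk u 4 5 6 7)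
    (h2 : chk u 8 9 10 11) : (fun k => toC (u k)) ∈ Lset := by
  refine ⟨fun k => ?_, EisP.toC _, EisP.toC _⟩
  fin_cases k
  · convert chk_inE8 h0 using 1
    funext i; fin_cases i <;> rfl
  · convert chk_inE8 h1 using 1
    funext i; fin_cases i <;> rfl
  · convert chk_inE8 h2 using 1
    funext i; fin_cases i <;> rfl

lemma pt_mem (i : Fin 13) : pt i ∈ Lset := by
  have h : ∀ i, chk (ptZ i) 0 1 2 3 ∧ chk (ptZ i) 4 5 6 7 ∧ chk (ptZ i) 8 9 10 11 := by
    decide +kernel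
  rw [pt_eq]
  exact chk_Lset (h i).1 (h i).2.1 (h i).2.2

lemma lnr_mem (i : Fin 13) : lnr i ∈ Lset := by
  have h : ∀ i, chk (lnZ i) 0 1 2 3 ∧ chk (lnZ i) 4 5 6 7 ∧ chk (lnZ i) 8 9 10 11 := by
    decide +kernel
  rw [lnr_eq]
  exact chk_Lset (h i).1 (h i).2.1 (h i).2.2

/-- All 26 roots. -/
def root : Fin 13 ⊕ Fin 13 → V := Sum.elim pt lnr

/-- The span of the 26 roots over the Eisenstein integers. -/
def RS : Submodule ES V := Submodule.span ES (Set.range root)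

lemma RS_le : RS ≤ LM := by
  refine Submodule.span_le.2 ?_
  rintro _ ⟨i | i, rfl⟩
  · exact pt_mem i
  · exact lnr_mem i

lemma RS_smul {z : ℂ} (hz : EisP z) {v : V} (hv : v ∈ RS) : z • v ∈ RS :=
  RS.smul_mem (⟨z, hz⟩ : ES) hv

lemma RS_pt (i : Fin 13) : pt i ∈ RS := Submodule.subset_span ⟨Sum.inl i, rfl⟩

lemma RS_lnr (i : Fin 13) : lnr i ∈ RS := Submodule.subset_span ⟨Sum.inr i, rfl⟩

/-- The vectors `θ e₀, …, θ e₃` of an `E₈` block from its roots. -/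
lemma block_mem {c e d f e0 e1 e2 e3 : V} (hc : c ∈ RS) (he : e ∈ RS) (hd : d ∈ RS) (hf : f ∈ RS)
    (h0 : c = qc • e0) (h1 : e = qc • e1) (h2 : d = e0 + e1 - e2) (h3 : f = e1 + e2 + e3) :
    θ • e0 ∈ RS ∧ θ • e1 ∈ RS ∧ θ • e2 ∈ RS ∧ θ • e3 ∈ RS := by
  have hq : θ = (-ω) * qc := by rw [qc_eq, θ_eq]; linear_combination ω_sq
  have a0 : θ • e0 ∈ RS := by
    rw [hq, mul_smul, ← h0]; exact RS_smul EisP.om.neg hc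
  have a1 : θ • e1 ∈ RS := by
    rw [hq, mul_smul, ← h1]; exact RS_smul EisP.om.neg he
  have a2 : θ • e2 ∈ RS := by
    have : θ • e2 = θ • e0 + θ • e1 - θ • d := by rw [h2]; module
    rw [this]
    exact RS.sub_mem (RS.add_mem a0 a1) (RS_smul EisP.th hd)
  have a3 : θ • e3 ∈ RS := by
    have : θ • e3 = θ • f - θ • e1 - θ • e2 := by rw [h3]; module
    rw [this]
    exact RS.sub_mem (RS.sub_mem (RS_smul EisP.th hf) a1) a2
  exact ⟨a0, a1, a2, a3⟩

/-- Standard basis vectors. -/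
def bv (k : Fin 14) : V := Pi.single k 1

lemma bv_apply (k j : Fin 14) : bv k j = if j = k then 1 else 0 := Pi.single_apply _ _ _

lemma block1 : θ • bv 0 ∈ RS ∧ θ • bv 1 ∈ RS ∧ θ • bv 2 ∈ RS ∧ θ • bv 3 ∈ RS := by
  apply block_mem (RS_pt 1) (RS_pt 4) (RS_lnr 4) (RS_lnr 7) <;>
  · funext k
    simp only [Pi.add_apply, Pi.sub_apply, Pi.smul_apply, smul_eq_mul, bv_apply]
    fin_cases k <;>
      simp [pt, lnr, rC1, rE1, rD1, rF1]

lemma block2 : θ • bv 4 ∈ RS ∧ θ • bv 5 ∈ RS ∧ θ • bv 6 ∈ RS ∧ θ • bv 7 ∈ RS := by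
  apply block_mem (RS_pt 2) (RS_pt 5) (RS_lnr 5) (RS_lnr 8) <;>
  · funext k
    simp only [Pi.add_apply, Pi.sub_apply, Pi.smul_apply, smul_eq_mul, bv_apply]
    fin_cases k <;>
      simp [pt, lnr, rC2, rE2, rD2, rF2]

lemma block3 : θ • bv 8 ∈ RS ∧ θ • bv 9 ∈ RS ∧ θ • bv 10 ∈ RS ∧ θ • bv 11 ∈ RS := by
  apply block_mem (RS_pt 3) (RS_pt 6) (RS_lnr 6) (RS_lnr 9) <;>
  · funext k
    simp only [Pi.add_apply, Pi.sub_apply, Pi.smul_apply, smul_eq_mul, bv_apply]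
    fin_cases k <;>
      simp [pt, lnr, rC3, rE3, rD3, rF3]

lemma bv12 : bv 12 ∈ RS := by
  have : bv 12 = lnr 4 - lnr 7 - θ • (θ • bv 2) - lnr 1 := by
    rw [smul_smul, ← pow_two, θ_sq]
    funext k
    simp only [Pi.add_apply, Pi.sub_apply, Pi.smul_apply, smul_eq_mul, bv_apply]
    fin_cases k <;>
      simp [lnr, rD1, rF1, rB1]
    norm_num
  rw [this]
  exact RS.sub_mem (RS.sub_mem (RS.sub_mem (RS_lnr 4) (RS_lnr 7))
    (RS_smul EisP.th block1.2.2.1)) (RS_lnr 1)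

lemma bv13 : bv 13 ∈ RS := by
  have : bv 13 = ω • (pt 0 - bv 12) := by
    have h3 : 1 = ω * ω ^ 2 := by linear_combination (1 - ω) * ω_sq
    funext k
    simp only [Pi.add_apply, Pi.sub_apply, Pi.smul_apply, smul_eq_mul, bv_apply]
    fin_cases k <;>
      simp [pt, rA, ← h3]
  rw [this]
  exact RS_smul EisP.om (RS.sub_mem (RS_pt 0) bv12)

lemma LM_le : LM ≤ RS := by
  rintro v ⟨h, h12, h13⟩
  obtain ⟨s1, t1, x1, hx1, h1⟩ := (inE8_iff _).1 (h 0)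
  obtain ⟨s2, t2, x2, hx2, h2⟩ := (inE8_iff _).1 (h 1)
  obtain ⟨s3, t3, x3, hx3, h3⟩ := (inE8_iff _).1 (h 2)
  have key : v = ((s1 : ℂ) • lnr 4 + (t1 : ℂ) • lnr 7 + x1 0 • (θ • bv 0) + x1 1 • (θ • bv 1)
      + x1 2 • (θ • bv 2) + x1 3 • (θ • bv 3)) + ((s2 : ℂ) • lnr 5 + (t2 : ℂ) • lnr 8
      + x2 0 • (θ • bv 4) + x2 1 • (θ • bv 5) + x2 2 • (θ • bv 6) + x2 3 • (θ • bv 7))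
      + ((s3 : ℂ) • lnr 6 + (t3 : ℂ) • lnr 9 + x3 0 • (θ • bv 8) + x3 1 • (θ • bv 9)
      + x3 2 • (θ • bv 10) + x3 3 • (θ • bv 11)) + v 12 • bv 12 + v 13 • bv 13 := by
    have a0 : v 0 = _ := h1 0
    have a1 : v 1 = _ := h1 1
    have a2 : v 2 = _ := h1 2
    have a3 : v 3 = _ := h1 3
    have a4 : v 4 = _ := h2 0
    have a5 : v 5 = _ := h2 1
    have a6 : v 6 = _ := h2 2
    have a7 : v 7 = _ := h2 3
    have a8 : v 8 = _ := h3 0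
    have a9 : v 9 = _ := h3 1
    have a10 : v 10 = _ := h3 2
    have a11 : v 11 = _ := h3 3
    funext k
    simp only [Pi.add_apply, Pi.sub_apply, Pi.smul_apply, smul_eq_mul, bv_apply]
    fin_cases k
    · simp [lnr, rD1, rD2, rD3, rF1, rF2, rF3, tet1, tet2, a0]; ring
    · simp [lnr, rD1, rD2, rD3, rF1, rF2, rF3, tet1, tet2, a1]; ring
    · simp [lnr, rD1, rD2, rD3, rF1, rF2, rF3, tet1, tet2, a2]; ring
    · simp [lnr, rD1, rD2, rD3, rF1, rF2, rF3, tet1, tet2, a3]; ring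
    · simp [lnr, rD1, rD2, rD3, rF1, rF2, rF3, tet1, tet2, a4]; ring
    · simp [lnr, rD1, rD2, rD3, rF1, rF2, rF3, tet1, tet2, a5]; ring
    · simp [lnr, rD1, rD2, rD3, rF1, rF2, rF3, tet1, tet2, a6]; ring
    · simp [lnr, rD1, rD2, rD3, rF1, rF2, rF3, tet1, tet2, a7]; ring
    · simp [lnr, rD1, rD2, rD3, rF1, rF2, rF3, tet1, tet2, a8]; ring
    · simp [lnr, rD1, rD2, rD3, rF1, rF2, rF3, tet1, tet2, a9]; ring
    · simp [lnr, rD1, rD2, rD3, rF1, rF2, rF3, tet1, tet2, a10]; ring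
    · simp [lnr, rD1, rD2, rD3, rF1, rF2, rF3, tet1, tet2, a11]; ring
    · simp [lnr, rD1, rD2, rD3, rF1, rF2, rF3]
    · simp [lnr, rD1, rD2, rD3, rF1, rF2, rF3]
  have blk : ∀ {a b c d e f : V} {z1 z2 z3 z4 : ℂ} {m n : ℤ}, a ∈ RS → b ∈ RS → EisP z1 →
      EisP z2 → EisP z3 → EisP z4 → (c ∈ RS ∧ d ∈ RS ∧ e ∈ RS ∧ f ∈ RS) →
      (m : ℂ) • a + (n : ℂ) • b + z1 • c + z2 • d + z3 • e + z4 • f ∈ RS := by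
    intro a b c d e f z1 z2 z3 z4 m n ha hb k1 k2 k3 k4 ⟨hc, hd, he, hf⟩
    exact RS.add_mem (RS.add_mem (RS.add_mem (RS.add_mem (RS.add_mem (RS_smul (EisP.int _) ha)
      (RS_smul (EisP.int _) hb)) (RS_smul k1 hc)) (RS_smul k2 hd)) (RS_smul k3 he)) (RS_smul k4 hf)
  rw [key]
  exact RS.add_mem (RS.add_mem (RS.add_mem (RS.add_mem
    (blk (RS_lnr 4) (RS_lnr 7) (hx1 0) (hx1 1) (hx1 2) (hx1 3) block1)
    (blk (RS_lnr 5) (RS_lnr 8) (hx2 0) (hx2 1) (hx2 2) (hx2 3) block2))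
    (blk (RS_lnr 6) (RS_lnr 9) (hx3 0) (hx3 1) (hx3 2) (hx3 3) block3))
    (RS_smul h12 bv12)) (RS_smul h13 bv13)

lemma mem_Lset_iff (v : V) : v ∈ Lset ↔ v ∈ RS :=
  ⟨fun h => LM_le h, fun h => RS_le h⟩

lemma span_root : Submodule.span ℂ (Set.range root) = ⊤ := by
  have hle : ∀ v ∈ RS, v ∈ Submodule.span ℂ (Set.range root) := by
    intro v hv
    exact Submodule.span_le_restrictScalars ES ℂ (Set.range root) hv
  have hth : ∀ v : V, θ • v ∈ RS → v ∈ Submodule.span ℂ (Set.range root) := by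
    intro v hv
    have := Submodule.smul_mem _ θ⁻¹ (hle _ hv)
    rwa [smul_smul, inv_mul_cancel₀ θ_ne_zero, one_smul] at this
  have hall : ∀ k, bv k ∈ Submodule.span ℂ (Set.range root) := by
    obtain ⟨a0, a1, a2, a3⟩ := block1
    obtain ⟨a4, a5, a6, a7⟩ := block2
    obtain ⟨a8, a9, a10, a11⟩ := block3
    intro k
    fin_cases k
    exacts [hth _ a0, hth _ a1, hth _ a2, hth _ a3, hth _ a4, hth _ a5, hth _ a6, hth _ a7,
      hth _ a8, hth _ a9, hth _ a10, hth _ a11, hle _ bv12, hle _ bv13]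
  refine eq_top_iff.2 fun v _ => ?_
  rw [pi_eq_sum_univ' v]
  refine Submodule.sum_mem _ fun k _ => Submodule.smul_mem _ _ ?_
  exact hall k

/-! ### Lifting monomial maps of the diagram to automorphisms of the lattice -/

lemma root_ext {f g : V ≃ₗ[ℂ] V} (h : ∀ i, f (root i) = g (root i)) : f = g := by
  have : (f : V →ₗ[ℂ] V) = g := by
    apply LinearMap.ext_on_range span_root h
  exact LinearEquiv.toLinearMap_injective this

lemma lin_surj : Function.Surjective (Fintype.linearCombination ℂ root) := by
  rw [← LinearMap.range_eq_top, Fintype.range_linearCombination, span_root]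

lemma map_RS (T : V →ₗ[ℂ] V) (h : ∀ i, T (root i) ∈ RS) : ∀ v ∈ RS, T v ∈ RS := by
  have : RS ≤ RS.comap (T.restrictScalars ES) := by
    refine Submodule.span_le.2 ?_
    rintro _ ⟨i, rfl⟩
    exact h i
  exact this

lemma root_mem (i : Fin 13 ⊕ Fin 13) : root i ∈ RS := Submodule.subset_span ⟨i, rfl⟩

lemma lift (π : Fin 13 ⊕ Fin 13 ≃ Fin 13 ⊕ Fin 13) (u w : Fin 13 ⊕ Fin 13 → ℂ)
    (hu : ∀ i, EisP (u i)) (hw : ∀ i, EisP (w i)) (huw : ∀ i, w i * u i = 1)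
    (hg : ∀ i j, conj (u i) * u j * herm (root (π i)) (root (π j)) = herm (root i) (root j)) :
    ∃ T ∈ AutL, ∀ i, T (root i) = u i • root (π i) := by
  set Φ := Fintype.linearCombination ℂ root with hΦ
  set r' : Fin 13 ⊕ Fin 13 → V := fun i => u i • root (π i) with hr'
  set Φ' := Fintype.linearCombination ℂ r' with hΦ'
  have hherm : ∀ c d, herm (Φ' c) (Φ' d) = herm (Φ c) (Φ d) := by
    intro c d
    simp only [hΦ, hΦ', Fintype.linearCombination_apply, herm_lin]
    refine Finset.sum_congr rfl fun i _ => Finset.sum_congr rfl fun j _ => ?_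
    rw [hr', herm_smul_left, herm_smul_right, ← hg i j]; ring
  have hs : Function.Surjective Φ := lin_surj
  have hs' : Function.Surjective Φ' := by
    rw [← LinearMap.range_eq_top, hΦ', Fintype.range_linearCombination, eq_top_iff, ← span_root,
      Submodule.span_le]
    rintro _ ⟨i, rfl⟩
    have h1 : r' (π.symm i) ∈ Submodule.span ℂ (Set.range r') := Submodule.subset_span ⟨_, rfl⟩
    have h2 := Submodule.smul_mem _ (w (π.symm i)) h1
    rw [hr', smul_smul, huw, one_smul, Equiv.apply_symm_apply] at h2
    exact h2
  have hker : ∀ c, Φ c = 0 → Φ' c = 0 := by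
    intro c hc
    refine herm_nondeg _ fun v => ?_
    obtain ⟨d, rfl⟩ := hs' v
    rw [hherm, hc]
    simpa using herm_smul_right (Φ d) 0 0
  obtain ⟨s, hsec⟩ := Φ.exists_rightInverse_of_surjective (LinearMap.range_eq_top.2 hs)
  have hsec' : ∀ v, Φ (s v) = v := fun v => LinearMap.congr_fun hsec v
  have hT : ∀ c, Φ' (s (Φ c)) = Φ' c := by
    intro c
    have := hker (s (Φ c) - c) (by rw [map_sub, hsec', sub_self])
    rwa [map_sub, sub_eq_zero] at this
  have hTherm : ∀ a b, herm (Φ' (s a)) (Φ' (s b)) = herm a b := by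
    intro a b; rw [hherm, hsec', hsec']
  let T0 : V →ₗ[ℂ] V := Φ' ∘ₗ s
  have hsurj : Function.Surjective T0 := by
    intro v
    obtain ⟨c, rfl⟩ := hs' v
    exact ⟨Φ c, hT c⟩
  have hinj : Function.Injective T0 := LinearMap.injective_iff_surjective.2 hsurj
  let T : V ≃ₗ[ℂ] V := LinearEquiv.ofBijective T0 ⟨hinj, hsurj⟩
  have hTroot : ∀ i, T (root i) = u i • root (π i) := by
    intro i
    have h1 := hT (Pi.single i 1)
    have h2 : Φ (Pi.single i 1) = root i := by simp [hΦ]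
    have h3 : Φ' (Pi.single i 1) = r' i := by simp [hΦ']
    rw [h2, h3] at h1
    exact h1
  have hTsymm : ∀ i, T.symm (root i) = w (π.symm i) • root (π.symm i) := by
    intro i
    rw [LinearEquiv.symm_apply_eq, map_smul, hTroot, smul_smul, huw, one_smul,
      Equiv.apply_symm_apply]
  refine ⟨T, ⟨fun v => ?_, hTherm⟩, hTroot⟩
  rw [mem_Lset_iff, mem_Lset_iff]
  constructor
  · exact map_RS T.toLinearMap (fun i => by
      change T (root i) ∈ RS
      rw [hTroot]; exact RS_smul (hu i) (root_mem _)) v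
  · intro h
    have := map_RS T.symm.toLinearMap (fun i => by
      change T.symm (root i) ∈ RS
      rw [hTsymm]; exact RS_smul (hw _) (root_mem _)) _ h
    change T.symm (T v) ∈ RS at this
    rwa [LinearEquiv.symm_apply_apply] at this

/-! ### Combinatorics of the projective plane -/

/-- The polarity, sending the point `[a:b:c]` to the line `aX + bY + cZ = 0`. -/
def δ : Fin 13 ≃ Fin 13 where
  toFun := ![12, 2, 1, 6, 7, 8, 3, 5, 4, 0, 10, 11, 9]
  invFun := ![9, 2, 1, 6, 8, 7, 3, 4, 5, 12, 10, 11, 0]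
  left_inv := by decide
  right_inv := by decide

lemma lv_δ : ∀ i, lv (δ i) = pv i := by decide +kernel

lemma inc_δ (i j : Fin 13) : Inc i (δ j) ↔ pv i ⬝ᵥ pv j = 0 := by rw [Inc, lv_δ]

lemma inc_symm (i j : Fin 13) : Inc i (δ j) ↔ Inc j (δ i) := by
  rw [inc_δ, inc_δ, dotProduct_comm]

lemma ex_pv' : ∀ a b c : ZMod 3, ![a, b, c] ≠ 0 → ∃ i, ∃ s : ZMod 3, s ≠ 0 ∧ ![a, b, c] = s • pv i := by
  decide +kernel

lemma ex_pv (v : Fin 3 → ZMod 3) (hv : v ≠ 0) : ∃ i, ∃ s : ZMod 3, s ≠ 0 ∧ v = s • pv i := by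
  have h : v = ![v 0, v 1, v 2] := by funext i; fin_cases i <;> rfl
  rw [h] at hv ⊢
  exact ex_pv' _ _ _ hv

lemma pv_ne : ∀ i, pv i ≠ 0 := by decide +kernel

lemma pv_inj : ∀ i j, ∀ s : ZMod 3, pv i = s • pv j → i = j := by decide +kernel

lemma line_unique : ∀ a j, Inc a j → ∀ b, a ≠ b → Inc b j → ∀ j', Inc a j' → Inc b j' → j' = j := by
  decide +kernel

lemma point_unique : ∀ i a, Inc i a → ∀ b, a ≠ b → Inc i b → ∀ i', Inc i' a → Inc i' b → i' = i := by
  decide +kernel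

lemma line_ext : ∀ j k, (∀ i, Inc i j → Inc i k) → j = k := by decide +kernel

lemma frame_indep : ∀ m : Fin 13, ¬ (pv 0 ⬝ᵥ pv m = 0 ∧ pv 1 ⬝ᵥ pv m = 0 ∧ pv 2 ⬝ᵥ pv m = 0) ∧
    ¬ (pv 3 ⬝ᵥ pv m = 0 ∧ pv 1 ⬝ᵥ pv m = 0 ∧ pv 2 ⬝ᵥ pv m = 0) ∧
    ¬ (pv 0 ⬝ᵥ pv m = 0 ∧ pv 3 ⬝ᵥ pv m = 0 ∧ pv 2 ⬝ᵥ pv m = 0) ∧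
    ¬ (pv 0 ⬝ᵥ pv m = 0 ∧ pv 1 ⬝ᵥ pv m = 0 ∧ pv 3 ⬝ᵥ pv m = 0) := by decide +kernel

lemma rigid (k l : Fin 13 → Fin 13) (h : ∀ i j, Inc (k i) (l j) ↔ Inc i j)
    (h0 : k 0 = 0) (h1 : k 1 = 1) (h2 : k 2 = 2) (h3 : k 3 = 3) : ∀ i, k i = i := by
  have fl : ∀ j a b, a ≠ b → Inc a j → Inc b j → k a = a → k b = b → l j = j := by
    intro j a b hab ha hb ka kb
    refine line_unique a j ha b hab hb (l j) ?_ ?_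
    · have := (h a j).2 ha; rwa [ka] at this
    · have := (h b j).2 hb; rwa [kb] at this
  have fp : ∀ i a b, a ≠ b → Inc i a → Inc i b → l a = a → l b = b → k i = i := by
    intro i a b hab ha hb la lb
    refine point_unique i a ha b hab hb (k i) ?_ ?_
    · have := (h i a).2 ha; rwa [la] at this
    · have := (h i b).2 hb; rwa [lb] at this
  have l1 := fl 1 0 1 (by decide) (by decide) (by decide) h0 h1
  have l2 := fl 2 0 2 (by decide) (by decide) (by decide) h0 h2
  have l3 := fl 3 0 3 (by decide) (by decide) (by decide) h0 h3
  have l12 := fl 12 1 2 (by decide) (by decide) (by decide) h1 h2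
  have l11 := fl 11 1 3 (by decide) (by decide) (by decide) h1 h3
  have l10 := fl 10 2 3 (by decide) (by decide) (by decide) h2 h3
  have k7 := fp 7 1 10 (by decide) (by decide) (by decide) l1 l10
  have k8 := fp 8 2 11 (by decide) (by decide) (by decide) l2 l11
  have k9 := fp 9 3 12 (by decide) (by decide) (by decide) l3 l12
  have l9 := fl 9 7 8 (by decide) (by decide) (by decide) k7 k8
  have l8 := fl 8 7 9 (by decide) (by decide) (by decide) k7 k9
  have l7 := fl 7 8 9 (by decide) (by decide) (by decide) k8 k9
  have k10 := fp 10 1 7 (by decide) (by decide) (by decide) l1 l7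
  have k11 := fp 11 2 8 (by decide) (by decide) (by decide) l2 l8
  have k12 := fp 12 3 9 (by decide) (by decide) (by decide) l3 l9
  have k6 := fp 6 12 9 (by decide) (by decide) (by decide) l12 l9
  have k5 := fp 5 11 8 (by decide) (by decide) (by decide) l11 l8
  have k4 := fp 4 10 7 (by decide) (by decide) (by decide) l10 l7
  intro i
  fin_cases i
  exacts [h0, h1, h2, h3, k4, k5, k6, k7, k8, k9, k10, k11, k12]

/-! ### The group `G` -/

lemma two_add_ω_ne : (2 + ω : ℂ) ≠ 0 := by
  intro h
  have := congrArg Complex.re h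
  simp [ω_re] at this
  norm_num at this

lemma pt_inj : Function.Injective pt := by
  intro i j h
  have h1 := herm_pp i j
  rw [← h, herm_pp] at h1
  by_contra hij
  simp [hij] at h1

lemma lnr_inj : Function.Injective lnr := by
  intro i j h
  have h1 := herm_ll i j
  rw [← h, herm_ll] at h1
  by_contra hij
  simp [hij] at h1

lemma herm_Gsub {g : V ≃ₗ[ℂ] V} (hg : g ∈ AutL) (u v : V) : herm (g u) (g v) = herm u v :=
  hg.2 u v

/-- The collineation attached to an element of `G`. -/
lemma Gsub_maps {g : V ≃ₗ[ℂ] V} (hg : g ∈ Gsub) : ∃ k l : Fin 13 → Fin 13,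
    (∀ i, g (pt i) = pt (k i)) ∧ (∀ j, g (lnr j) = lnr (l j)) ∧
    (∀ i j, Inc (k i) (l j) ↔ Inc i j) ∧ Function.Surjective k ∧ Function.Surjective l := by
  obtain ⟨h0, h1, h2⟩ := hg
  have e1 : ∀ i, ∃ k, g (pt i) = pt k := by
    intro i
    have : g (pt i) ∈ Set.range pt := by rw [← h1]; exact ⟨_, ⟨i, rfl⟩, rfl⟩
    obtain ⟨k, hk⟩ := this; exact ⟨k, hk.symm⟩
  have e2 : ∀ i, ∃ k, g (lnr i) = lnr k := by
    intro i
    have : g (lnr i) ∈ Set.range lnr := by rw [← h2]; exact ⟨_, ⟨i, rfl⟩, rfl⟩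
    obtain ⟨k, hk⟩ := this; exact ⟨k, hk.symm⟩
  choose k hk using e1
  choose l hl using e2
  refine ⟨k, l, hk, hl, fun i j => ?_, ?_, ?_⟩
  · have := herm_Gsub h0 (pt i) (lnr j)
    rw [hk, hl, herm_pl, herm_pl] at this
    by_cases ha : Inc (k i) (l j) <;> by_cases hb : Inc i j <;>
      simp [ha, hb, two_add_ω_ne, two_add_ω_ne.symm] at this ⊢
  · refine Finite.injective_iff_surjective.1 fun a b hab => ?_
    apply pt_inj; apply g.injective; rw [hk, hk, hab]
  · refine Finite.injective_iff_surjective.1 fun a b hab => ?_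
    apply lnr_inj; apply g.injective; rw [hl, hl, hab]

lemma Gsub_rigid {g : V ≃ₗ[ℂ] V} (hg : g ∈ Gsub) (h0 : g (pt 0) = pt 0) (h1 : g (pt 1) = pt 1)
    (h2 : g (pt 2) = pt 2) (h3 : g (pt 3) = pt 3) : g = 1 := by
  obtain ⟨k, l, hk, hl, hi, -, -⟩ := Gsub_maps hg
  rw [hk] at h0 h1 h2 h3
  have hkid := rigid k l hi (pt_inj h0) (pt_inj h1) (pt_inj h2) (pt_inj h3)
  have hlid : ∀ j, l j = j := by
    intro j
    refine (line_ext j (l j) fun i hij => ?_).symm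
    have := (hi i j).2 hij
    rwa [hkid] at this
  apply root_ext
  rintro (i | j)
  · change g (pt i) = pt i
    rw [hk, hkid]
  · change g (lnr j) = lnr j
    rw [hl, hlid]

lemma Gsub_ext {g g' : V ≃ₗ[ℂ] V} (hg : g ∈ Gsub) (hg' : g' ∈ Gsub)
    (h : ∀ i, g (pt i) = g' (pt i)) : g = g' := by
  have hm : g'⁻¹ * g ∈ Gsub := mul_mem (inv_mem hg') hg
  have hp : ∀ i, (g'⁻¹ * g) (pt i) = pt i := by
    intro i
    change g'.symm (g (pt i)) = pt i
    rw [h, LinearEquiv.symm_apply_apply]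
  have := Gsub_rigid hm (hp 0) (hp 1) (hp 2) (hp 3)
  exact (inv_mul_eq_one.1 this).symm

section
open Matrix

/-- The index of the projective point spanned by a vector. -/
def idx (v : Fin 3 → ZMod 3) : Fin 13 :=
  open Classical in
  if h : ∃ i, ∃ s : ZMod 3, s ≠ 0 ∧ v = s • pv i then h.choose else 0

lemma idx_spec {v : Fin 3 → ZMod 3} (hv : v ≠ 0) : ∃ s : ZMod 3, s ≠ 0 ∧ v = s • pv (idx v) := by
  have h := ex_pv v hv
  rw [idx, dif_pos h]
  exact h.choose_spec

lemma idx_eq {v : Fin 3 → ZMod 3} {s : ZMod 3} {i : Fin 13} (hs : s ≠ 0) (h : v = s • pv i) :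
    idx v = i := by
  have hv : v ≠ 0 := by rw [h]; exact smul_ne_zero hs (pv_ne i)
  obtain ⟨t, ht, h'⟩ := idx_spec hv
  refine pv_inj _ _ (t⁻¹ * s) ?_
  rw [mul_smul, ← h, eq_inv_smul_iff₀ ht, ← h']

/-- The action of an invertible matrix on the points. -/
def pmap (M : Matrix (Fin 3) (Fin 3) (ZMod 3)) (i : Fin 13) : Fin 13 := idx (M *ᵥ pv i)

lemma mulVec_ne {M N : Matrix (Fin 3) (Fin 3) (ZMod 3)} (h : N * M = 1) {v : Fin 3 → ZMod 3}
    (hv : v ≠ 0) : M *ᵥ v ≠ 0 := by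
  intro h0
  apply hv
  rw [← one_mulVec v, ← h, ← mulVec_mulVec, h0, mulVec_zero]

lemma pmap_spec {M N : Matrix (Fin 3) (Fin 3) (ZMod 3)} (h : N * M = 1) (i : Fin 13) :
    ∃ s : ZMod 3, s ≠ 0 ∧ M *ᵥ pv i = s • pv (pmap M i) :=
  idx_spec (mulVec_ne h (pv_ne i))

lemma pmap_inj {M N : Matrix (Fin 3) (Fin 3) (ZMod 3)} (h : N * M = 1) :
    Function.Injective (pmap M) := by
  intro i j hij
  obtain ⟨s, hs, h1⟩ := pmap_spec h i
  obtain ⟨t, ht, h2⟩ := pmap_spec h j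
  rw [hij] at h1
  have h3 : M *ᵥ pv i = M *ᵥ ((s * t⁻¹) • pv j) := by
    rw [mulVec_smul, h2, h1, smul_smul, mul_assoc, inv_mul_cancel₀ ht, mul_one]
  have h4 : pv i = (s * t⁻¹) • pv j := by
    rw [← one_mulVec (pv i), ← h, ← mulVec_mulVec, h3, mulVec_mulVec, h, one_mulVec]
  exact pv_inj _ _ _ h4

/-- The permutation of the points. -/
def pperm {M N : Matrix (Fin 3) (Fin 3) (ZMod 3)} (h : N * M = 1) : Fin 13 ≃ Fin 13 :=
  Equiv.ofBijective (pmap M) (Finite.injective_iff_bijective.1 (pmap_inj h))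

lemma pmap_dot {M N : Matrix (Fin 3) (Fin 3) (ZMod 3)} (h : N * M = 1) (i j : Fin 13) :
    pv (pmap M i) ⬝ᵥ pv (pmap Nᵀ j) = 0 ↔ pv i ⬝ᵥ pv j = 0 := by
  have h' : Mᵀ * Nᵀ = 1 := by rw [← transpose_mul, h, transpose_one]
  obtain ⟨s, hs, h1⟩ := pmap_spec h i
  obtain ⟨t, ht, h2⟩ := pmap_spec h' j
  have h3 : (M *ᵥ pv i) ⬝ᵥ (Nᵀ *ᵥ pv j) = pv i ⬝ᵥ pv j := by
    rw [mulVec_transpose, dotProduct_comm, ← dotProduct_mulVec, mulVec_mulVec, h, one_mulVec,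
      dotProduct_comm]
  rw [← h3, h1, h2, smul_dotProduct, dotProduct_smul, smul_eq_mul, smul_eq_mul]
  simp [hs, ht]

lemma exists_GL (M N : Matrix (Fin 3) (Fin 3) (ZMod 3)) (h : N * M = 1) :
    ∃ g ∈ Gsub, ∀ i, g (pt i) = pt (pmap M i) := by
  have h' : Mᵀ * Nᵀ = 1 := by rw [← transpose_mul, h, transpose_one]
  set a := pperm h with ha
  set b : Fin 13 ≃ Fin 13 := (δ.symm.trans (pperm h')).trans δ with hb
  have hab : ∀ i j, Inc (a i) (b j) ↔ Inc i j := by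
    intro i j
    obtain ⟨j, rfl⟩ := δ.surjective j
    have : b (δ j) = δ (pmap Nᵀ j) := by simp [hb, pperm]
    rw [this, inc_δ, inc_δ]
    exact pmap_dot h i j
  obtain ⟨T, hT, hr⟩ := lift (Equiv.sumCongr a b) (fun _ => 1) (fun _ => 1) (fun _ => EisP.one)
    (fun _ => EisP.one) (fun _ => one_mul _) (by
      rintro (i | i) (j | j)
      · simp [root, herm_pp]
      · simp [root, herm_pl, hab]
      · simp [root, herm_lp, hab]
      · simp [root, herm_ll])
  have hp : ∀ i, T (pt i) = pt (a i) := fun i => by simpa [root] using hr (Sum.inl i)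
  have hl : ∀ i, T (lnr i) = lnr (b i) := fun i => by simpa [root] using hr (Sum.inr i)
  refine ⟨T, ⟨hT, ?_, ?_⟩, hp⟩
  · rw [← Set.range_comp]
    have : ⇑T ∘ pt = pt ∘ a := funext hp
    rw [this, a.surjective.range_comp]
  · rw [← Set.range_comp]
    have : ⇑T ∘ lnr = lnr ∘ b := funext hl
    rw [this, b.surjective.range_comp]

abbrev GL3 : Type := Matrix.GeneralLinearGroup (Fin 3) (ZMod 3)

lemma GL_inv (A : GL3) : ((A⁻¹ : GL3) : Matrix (Fin 3) (Fin 3) (ZMod 3)) * A = 1 := by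
  rw [← Units.val_mul, inv_mul_cancel, Units.val_one]

/-- The automorphism of the lattice attached to a matrix. -/
def φ0 (A : GL3) : V ≃ₗ[ℂ] V := (exists_GL A _ (GL_inv A)).choose

lemma φ0_mem (A : GL3) : φ0 A ∈ Gsub := (exists_GL A _ (GL_inv A)).choose_spec.1

lemma φ0_pt (A : GL3) (i : Fin 13) : φ0 A (pt i) = pt (pmap A i) :=
  (exists_GL A _ (GL_inv A)).choose_spec.2 i

lemma pmap_mul (A B : GL3) (i : Fin 13) :
    pmap ((A * B : GL3) : Matrix (Fin 3) (Fin 3) (ZMod 3)) i = pmap A (pmap B i) := by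
  obtain ⟨s, hs, h1⟩ := pmap_spec (GL_inv B) i
  obtain ⟨t, ht, h2⟩ := pmap_spec (GL_inv A) (pmap B i)
  refine idx_eq (mul_ne_zero hs ht) ?_
  rw [Units.val_mul, ← mulVec_mulVec, h1, mulVec_smul, h2, smul_smul]

lemma φ0_mul (A B : GL3) : φ0 (A * B) = φ0 A * φ0 B := by
  refine Gsub_ext (φ0_mem _) (mul_mem (φ0_mem A) (φ0_mem B)) fun i => ?_
  rw [LinearEquiv.mul_apply, φ0_pt, φ0_pt, φ0_pt, pmap_mul]

/-- The homomorphism from `GL₃(𝔽₃)` to `G`. -/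
def φ : GL3 →* Gsub := MonoidHom.mk' (fun A => ⟨φ0 A, φ0_mem A⟩)
  (fun A B => Subtype.ext (φ0_mul A B))

lemma φ_val (A : GL3) : ((φ A : Gsub) : V ≃ₗ[ℂ] V) = φ0 A := rfl

lemma φ_ker : φ.ker = Subgroup.center GL3 := by
  ext A
  rw [MonoidHom.mem_ker]
  constructor
  · intro hA
    have hA' : φ0 A = 1 := by rw [← φ_val, hA, OneMemClass.coe_one]
    have hp : ∀ i, pmap A i = i := by
      intro i
      apply pt_inj
      rw [← φ0_pt, hA', LinearEquiv.coe_one, id]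
    have hs : ∀ i, ∃ s : ZMod 3, (A : Matrix (Fin 3) (Fin 3) (ZMod 3)) *ᵥ pv i = s • pv i := by
      intro i
      obtain ⟨s, -, h⟩ := pmap_spec (GL_inv A) i
      rw [hp] at h
      exact ⟨s, h⟩
    obtain ⟨a, ha⟩ := hs 0
    obtain ⟨b, hb⟩ := hs 1
    obtain ⟨c, hc⟩ := hs 2
    obtain ⟨d, hd⟩ := hs 3
    have key : (A : Matrix (Fin 3) (Fin 3) (ZMod 3)) = d • (1 : Matrix (Fin 3) (Fin 3) (ZMod 3)) := by
      have a0 := congrFun ha 0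
      have a1 := congrFun ha 1
      have a2 := congrFun ha 2
      have b0 := congrFun hb 0
      have b1 := congrFun hb 1
      have b2 := congrFun hb 2
      have c0 := congrFun hc 0
      have c1 := congrFun hc 1
      have c2 := congrFun hc 2
      have d0 := congrFun hd 0
      have d1 := congrFun hd 1
      have d2 := congrFun hd 2
      simp [pv, mulVec, dotProduct, Fin.sum_univ_three] at a0 a1 a2 b0 b1 b2 c0 c1 c2 d0 d1 d2
      ext i j
      fin_cases i <;> fin_cases j <;> simp <;> simp_all
    rw [Subgroup.mem_center_iff]
    intro B
    apply Units.ext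
    rw [Units.val_mul, Units.val_mul, key]
    simp
  · intro hA
    rw [Matrix.GeneralLinearGroup.center_eq_range_scalar] at hA
    obtain ⟨u, hu⟩ := hA
    apply Subtype.ext
    rw [φ_val, OneMemClass.coe_one]
    refine Gsub_ext (φ0_mem _) (one_mem _) fun i => ?_
    rw [φ0_pt, LinearEquiv.coe_one, id]
    refine congrArg pt ?_
    refine idx_eq (s := (u : ZMod 3)) u.ne_zero ?_
    rw [← hu]
    ext j
    simp [Matrix.GeneralLinearGroup.scalar, mulVec_diagonal]

/-- The determinant of three vectors. -/
def D3 (x y z : Fin 3 → ZMod 3) : ZMod 3 := (Matrix.of ![x, y, z]).det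

lemma D3_eq (x y z : Fin 3 → ZMod 3) : D3 x y z = x 0 * y 1 * z 2 - x 0 * y 2 * z 1
    - x 1 * y 0 * z 2 + x 1 * y 2 * z 0 + x 2 * y 0 * z 1 - x 2 * y 1 * z 0 := by
  rw [D3, det_fin_three]; simp

lemma D3_ne {k l : Fin 13 → Fin 13} (hi : ∀ i j, Inc (k i) (l j) ↔ Inc i j)
    (hl : Function.Surjective l) {a b c : Fin 13}
    (h : ∀ m, ¬ (pv a ⬝ᵥ pv m = 0 ∧ pv b ⬝ᵥ pv m = 0 ∧ pv c ⬝ᵥ pv m = 0)) :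
    D3 (pv (k a)) (pv (k b)) (pv (k c)) ≠ 0 := by
  intro h0
  obtain ⟨w, hw, hw0⟩ := Matrix.exists_mulVec_eq_zero_iff.2 h0
  obtain ⟨m, s, hs, rfl⟩ := ex_pv w hw
  obtain ⟨m', hm'⟩ := hl (δ m)
  obtain ⟨n, rfl⟩ := δ.surjective m'
  have key : ∀ i, pv (k i) ⬝ᵥ (s • pv m) = 0 → pv i ⬝ᵥ pv n = 0 := by
    intro i h1
    rw [dotProduct_smul, smul_eq_mul, mul_eq_zero, or_iff_right hs, ← inc_δ, ← hm', hi, inc_δ] at h1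
    exact h1
  exact h n ⟨key a (congrFun hw0 0), key b (congrFun hw0 1), key c (congrFun hw0 2)⟩

lemma φ_surj : Function.Surjective φ := by
  rintro ⟨g, hg⟩
  obtain ⟨k, l, hk, hl, hi, hks, hls⟩ := Gsub_maps hg
  have n0 := D3_ne hi hls (fun m => (frame_indep m).1)
  have n1 := D3_ne hi hls (fun m => (frame_indep m).2.1)
  have n2 := D3_ne hi hls (fun m => (frame_indep m).2.2.1)
  have n3 := D3_ne hi hls (fun m => (frame_indep m).2.2.2)
  set p := pv (k 0) with hp
  set q := pv (k 1) with hq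
  set r := pv (k 2) with hr
  set t := pv (k 3) with ht
  let M : Matrix (Fin 3) (Fin 3) (ZMod 3) :=
    (Matrix.of ![D3 t q r • p, D3 p t r • q, D3 p q t • r])ᵀ
  have hdet : M.det = D3 t q r * D3 p t r * D3 p q t * D3 p q r := by
    rw [det_transpose, D3_eq p q r, det_fin_three]
    simp
    ring
  have hM : M.det ≠ 0 := by
    rw [hdet]; exact mul_ne_zero (mul_ne_zero (mul_ne_zero n1 n2) n3) n0
  let A : GL3 := Matrix.GeneralLinearGroup.mkOfDetNeZero M hM
  have hA : (A : Matrix (Fin 3) (Fin 3) (ZMod 3)) = M := rfl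
  have e0 : pmap M 0 = k 0 := by
    refine idx_eq n1 ?_
    rw [← hp]
    ext i
    have h3 : pv 0 = ![1, 0, 0] := rfl
    rw [h3]
    fin_cases i <;> simp [M, mulVec, dotProduct, Fin.sum_univ_three]
  have e1 : pmap M 1 = k 1 := by
    refine idx_eq n2 ?_
    rw [← hq]
    ext i
    have h3 : pv 1 = ![0, 1, 0] := rfl
    rw [h3]
    fin_cases i <;> simp [M, mulVec, dotProduct, Fin.sum_univ_three]
  have e2 : pmap M 2 = k 2 := by
    refine idx_eq n3 ?_
    rw [← hr]
    ext i
    have h3 : pv 2 = ![0, 0, 1] := rfl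
    rw [h3]
    fin_cases i <;> simp [M, mulVec, dotProduct, Fin.sum_univ_three]
  have e3 : pmap M 3 = k 3 := by
    refine idx_eq n0 ?_
    rw [← ht]
    ext i
    have h3 : pv 3 = ![1, 1, 1] := rfl
    rw [h3]
    fin_cases i <;> simp [M, mulVec, dotProduct, Fin.sum_univ_three, D3_eq] <;> ring
  refine ⟨A, Subtype.ext ?_⟩
  rw [φ_val]
  change φ0 A = g
  have hm : g⁻¹ * φ0 A ∈ Gsub := mul_mem (inv_mem hg) (φ0_mem A)
  have fx : ∀ i, pmap M i = k i → (g⁻¹ * φ0 A) (pt i) = pt i := by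
    intro i h
    change g.symm (φ0 A (pt i)) = pt i
    rw [φ0_pt, hA, h, ← hk, LinearEquiv.symm_apply_apply]
  exact (inv_mul_eq_one.1 (Gsub_rigid hm (fx 0 e0) (fx 1 e1) (fx 2 e2) (fx 3 e3))).symm

lemma Gsub_iso : Nonempty (Gsub ≃* PGL3F3) :=
  ⟨((QuotientGroup.quotientMulEquivOfEq φ_ker).symm.trans
    (QuotientGroup.quotientKerEquivOfSurjective φ φ_surj)).symm⟩

/-- A matrix moving the first coordinate point to a given point. -/
def Mt (i : Fin 13) : Matrix (Fin 3) (Fin 3) (ZMod 3) :=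
  if pv i 0 ≠ 0 then !![pv i 0, 0, 0; pv i 1, 1, 0; pv i 2, 0, 1]
  else if pv i 1 ≠ 0 then !![pv i 0, 1, 0; pv i 1, 0, 0; pv i 2, 0, 1]
  else !![pv i 0, 1, 0; pv i 1, 0, 1; pv i 2, 0, 0]

lemma Mt_det (i : Fin 13) : (Mt i).det ≠ 0 := by
  rw [det_fin_three]
  revert i
  decide +kernel

lemma Mt_pv : ∀ i, Mt i *ᵥ pv 0 = (1 : ZMod 3) • pv i := by decide +kernel

lemma Gsub_trans (i : Fin 13) : ∃ g ∈ Gsub, g (pt 0) = pt i := by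
  let A : GL3 := Matrix.GeneralLinearGroup.mkOfDetNeZero (Mt i) (Mt_det i)
  refine ⟨φ0 A, φ0_mem A, ?_⟩
  rw [φ0_pt]
  congr 1
  exact idx_eq one_ne_zero (Mt_pv i)

end

/-! ### The automorphism `σ` and the group `Q` -/

lemma exists_sigma : ∃ σ ∈ AutL, (∀ i, σ (pt i) = (-ω) • lnr (δ i)) ∧
    ∀ i, σ (lnr (δ i)) = pt i := by
  let π : Fin 13 ⊕ Fin 13 ≃ Fin 13 ⊕ Fin 13 :=
    { toFun := Sum.elim (fun i => Sum.inr (δ i)) (fun j => Sum.inl (δ.symm j))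
      invFun := Sum.elim (fun i => Sum.inr (δ i)) (fun j => Sum.inl (δ.symm j))
      left_inv := by rintro (i | i) <;> simp
      right_inv := by rintro (i | i) <;> simp }
  have h1 : (1 + ω) * (-ω) = 1 := by linear_combination -ω_sq
  obtain ⟨T, hT, hr⟩ := lift π (Sum.elim (fun _ => -ω) (fun _ => 1))
    (Sum.elim (fun _ => 1 + ω) (fun _ => 1))
    (by rintro (i | i); exacts [EisP.om.neg, EisP.one])
    (by rintro (i | i); exacts [EisP.one.add EisP.om, EisP.one])
    (by rintro (i | i); exacts [h1, one_mul _])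
    (by
      rintro (i | i) (j | j)
      · change conj (-ω) * (-ω) * herm (lnr (δ i)) (lnr (δ j)) = herm (pt i) (pt j)
        rw [herm_ll, herm_pp, map_neg, conj_ω]
        simp only [δ.injective.eq_iff]
        split_ifs
        · linear_combination (-3 : ℂ) * h1
        · ring
      · obtain ⟨j, rfl⟩ := δ.surjective j
        change conj (-ω) * 1 * herm (lnr (δ i)) (pt (δ.symm (δ j))) = herm (pt i) (lnr (δ j))
        rw [Equiv.symm_apply_apply, herm_lp, herm_pl, map_neg, conj_ω]
        simp only [inc_symm j i]
        split_ifs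
        · linear_combination -ω_sq
        · ring
      · obtain ⟨i, rfl⟩ := δ.surjective i
        change conj (1 : ℂ) * (-ω) * herm (pt (δ.symm (δ i))) (lnr (δ j)) = herm (lnr (δ i)) (pt j)
        rw [Equiv.symm_apply_apply, herm_lp, herm_pl, map_one]
        simp only [inc_symm j i]
        split_ifs
        · linear_combination -ω_sq
        · ring
      · change conj (1 : ℂ) * 1 * herm (pt (δ.symm i)) (pt (δ.symm j)) = herm (lnr i) (lnr j)
        rw [herm_pp, herm_ll, map_one]
        simp only [δ.symm.injective.eq_iff]
        split_ifs <;> ring)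
  refine ⟨T, hT, fun i => hr (Sum.inl i), fun i => ?_⟩
  have := hr (Sum.inr (δ i))
  change T (lnr (δ i)) = (1 : ℂ) • pt (δ.symm (δ i)) at this
  rwa [Equiv.symm_apply_apply, one_smul] at this

lemma neg_ω_pow_six : (-ω) ^ 6 = 1 := by
  have h3 : ω ^ 3 = 1 := by linear_combination (ω - 1) * ω_sq
  linear_combination (ω ^ 3 + 1) * h3

lemma orderOf_neg_ω : orderOf (-ω) = 6 := by
  have h3 : ω ^ 3 = 1 := by linear_combination (ω - 1) * ω_sq
  refine orderOf_eq_of_pow_and_pow_div_prime (by norm_num) neg_ω_pow_six ?_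
  intro p hp hd h
  have hp' : p ∈ Nat.primeFactors 6 := Nat.mem_primeFactors.2 ⟨hp, hd, by norm_num⟩
  have h6 : Nat.primeFactors 6 = {2, 3} := by decide +kernel
  rw [h6] at hp'
  simp only [Finset.mem_insert, Finset.mem_singleton] at hp'
  rcases hp' with rfl | rfl
  · norm_num at h
    have : (2 : ℂ) = 0 := by linear_combination -h - h3
    norm_num at this
  · change (-ω) ^ 2 = 1 at h
    exact two_add_ω_ne (by linear_combination ω_sq - h)

lemma EisUnit.exists_pow {u : ℂ} (hu : EisUnit u) : ∃ m : ℕ, (-ω) ^ m = u := by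
  have h3 : ω ^ 3 = 1 := by linear_combination (ω - 1) * ω_sq
  rcases hu with rfl | rfl | rfl | rfl | rfl | rfl
  · exact ⟨0, by simp⟩
  · exact ⟨3, by linear_combination -h3⟩
  · exact ⟨4, by linear_combination ω * h3⟩
  · exact ⟨1, by simp⟩
  · exact ⟨2, by ring⟩
  · exact ⟨5, by linear_combination -ω ^ 2 * h3⟩

lemma two_on_line : ∀ l j : Fin 13, ∃ i, i ≠ j ∧ Inc i l := by decide +kernel

lemma sigma_sq {σ : V ≃ₗ[ℂ] V} (hp : ∀ i, σ (pt i) = (-ω) • lnr (δ i))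
    (hl : ∀ i, σ (lnr (δ i)) = pt i) (v : V) : σ (σ v) = (-ω) • v := by
  have : (σ : V →ₗ[ℂ] V) ∘ₗ (σ : V →ₗ[ℂ] V) = (-ω) • LinearMap.id := by
    apply LinearMap.ext_on_range span_root
    rintro (i | j)
    · change σ (σ (pt i)) = (-ω) • pt i
      rw [hp, map_smul, hl]
    · obtain ⟨j, rfl⟩ := δ.surjective j
      change σ (σ (lnr (δ j))) = (-ω) • lnr (δ j)
      rw [hl, hp]
  exact LinearMap.congr_fun this v

lemma sigma_pow {σ : V ≃ₗ[ℂ] V} (hp : ∀ i, σ (pt i) = (-ω) • lnr (δ i))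
    (hl : ∀ i, σ (lnr (δ i)) = pt i) (m : ℕ) (v : V) : (σ ^ (2 * m)) v = (-ω) ^ m • v := by
  induction m generalizing v with
  | zero => simp
  | succ m ih =>
    have : σ ^ (2 * (m + 1)) = σ ^ (2 * m) * (σ * σ) := by rw [← pow_two, ← pow_add]; rfl
    rw [this, LinearEquiv.mul_apply, ih, LinearEquiv.mul_apply, sigma_sq hp hl, smul_smul, pow_succ]

lemma sigma_pow_twelve {σ : V ≃ₗ[ℂ] V} (hp : ∀ i, σ (pt i) = (-ω) • lnr (δ i))
    (hl : ∀ i, σ (lnr (δ i)) = pt i) : σ ^ 12 = 1 := by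
  apply LinearEquiv.ext
  intro v
  have := sigma_pow hp hl 6 v
  rw [neg_ω_pow_six, one_smul] at this
  simpa using this

lemma sigma_pow_mem {σ : V ≃ₗ[ℂ] V} (hp : ∀ i, σ (pt i) = (-ω) • lnr (δ i))
    (hl : ∀ i, σ (lnr (δ i)) = pt i) {k : ℕ} (h : σ ^ k ∈ Gsub) : 12 ∣ k := by
  obtain ⟨a, -, ha, -⟩ := Gsub_maps h
  have h0 := ha 0
  have hne : -ω ≠ 0 := neg_ne_zero.2 ω_ne_zero
  rcases Nat.even_or_odd' k with ⟨m, rfl | rfl⟩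
  · rw [sigma_pow hp hl] at h0
    have h1 := congrArg (herm (pt 0)) h0
    rw [herm_smul_right, herm_pp, herm_pp, if_pos rfl] at h1
    have h2 : (-ω) ^ m = 1 := by
      split_ifs at h1
      · linear_combination (-1 / 3 : ℂ) * h1
      · exact absurd h1 (mul_ne_zero (pow_ne_zero _ hne) (by norm_num))
    have := orderOf_dvd_of_pow_eq_one h2
    rw [orderOf_neg_ω] at this
    omega
  · exfalso
    rw [pow_succ, LinearEquiv.mul_apply, hp, sigma_pow hp hl, smul_smul] at h0
    obtain ⟨i, hi, hI⟩ := two_on_line (δ 0) (a 0)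
    have h1 := congrArg (herm (pt i)) h0
    rw [herm_smul_right, herm_pl, herm_pp, if_pos hI, if_neg hi] at h1
    exact mul_ne_zero (mul_ne_zero (pow_ne_zero _ hne) hne) two_add_ω_ne h1

lemma sigma_order {σ : V ≃ₗ[ℂ] V} (hp : ∀ i, σ (pt i) = (-ω) • lnr (δ i))
    (hl : ∀ i, σ (lnr (δ i)) = pt i) : orderOf σ = 12 := by
  refine Nat.dvd_antisymm (orderOf_dvd_of_pow_eq_one (sigma_pow_twelve hp hl))
    (sigma_pow_mem hp hl ?_)
  rw [pow_orderOf_eq_one]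
  exact one_mem _

lemma sigma_conj {σ : V ≃ₗ[ℂ] V} (hp : ∀ i, σ (pt i) = (-ω) • lnr (δ i))
    (hl : ∀ i, σ (lnr (δ i)) = pt i) (hA : σ ∈ AutL) {g : V ≃ₗ[ℂ] V} (hg : g ∈ Gsub) : σ * g * σ⁻¹ ∈ Gsub := by
  obtain ⟨k, l, hk, hl', -, hks, hls⟩ := Gsub_maps hg
  have i1 : ∀ i, σ⁻¹ (pt i) = lnr (δ i) := fun i => by
    rw [← hl, ← LinearEquiv.mul_apply, inv_mul_cancel, LinearEquiv.coe_one, id]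
  have i2 : ∀ i, σ⁻¹ ((-ω) • lnr (δ i)) = pt i := fun i => by
    rw [← hp, ← LinearEquiv.mul_apply, inv_mul_cancel, LinearEquiv.coe_one, id]
  have hne : -ω ≠ 0 := neg_ne_zero.2 ω_ne_zero
  have e1 : ∀ i, (σ * g * σ⁻¹) (pt i) = pt (δ.symm (l (δ i))) := by
    intro i
    rw [LinearEquiv.mul_apply, LinearEquiv.mul_apply, i1, hl', ← hl, Equiv.apply_symm_apply]
  have e2 : ∀ i, (σ * g * σ⁻¹) (lnr i) = lnr (δ (k (δ.symm i))) := by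
    intro i
    obtain ⟨i, rfl⟩ := δ.surjective i
    apply smul_right_injective V hne
    change (-ω) • (σ * g * σ⁻¹) (lnr (δ i)) = (-ω) • lnr (δ (k (δ.symm (δ i))))
    rw [← map_smul, LinearEquiv.mul_apply, LinearEquiv.mul_apply, i2, hk, hp,
      Equiv.symm_apply_apply]
  refine ⟨mul_mem (mul_mem hA hg.1) (inv_mem hA), ?_, ?_⟩
  · rw [← Set.range_comp]
    have : ⇑(σ * g * σ⁻¹) ∘ pt = pt ∘ (δ.symm ∘ l ∘ δ) := funext e1
    rw [this]
    exact (δ.symm.surjective.comp (hls.comp δ.surjective)).range_comp _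
  · rw [← Set.range_comp]
    have : ⇑(σ * g * σ⁻¹) ∘ lnr = lnr ∘ (δ ∘ k ∘ δ.symm) := funext e2
    rw [this]
    exact (δ.surjective.comp (hks.comp δ.symm.surjective)).range_comp _

lemma sigma_orbit {σ : V ≃ₗ[ℂ] V} (hp : ∀ i, σ (pt i) = (-ω) • lnr (δ i))
    (hl : ∀ i, σ (lnr (δ i)) = pt i) {w : V} (hw : w ∈ UnitRoots) : ∃ q ∈ QGroup σ, q (pt 0) = w := by
  have hσ : σ ∈ QGroup σ := Subgroup.subset_closure (Or.inl rfl)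
  have hG : ∀ g ∈ Gsub, g ∈ QGroup σ := fun g hg => Subgroup.subset_closure (Or.inr hg)
  obtain ⟨u, hu, r, hr, rfl⟩ := hw
  obtain ⟨m, rfl⟩ := hu.exists_pow
  rcases hr with ⟨i, rfl⟩ | ⟨j, rfl⟩
  · obtain ⟨g, hg, h⟩ := Gsub_trans i
    refine ⟨σ ^ (2 * m) * g, mul_mem (pow_mem hσ _) (hG g hg), ?_⟩
    rw [LinearEquiv.mul_apply, h, sigma_pow hp hl]
  · obtain ⟨j, rfl⟩ := δ.surjective j
    obtain ⟨g, hg, h⟩ := Gsub_trans j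
    refine ⟨σ ^ (2 * (m + 5)) * (σ * g), mul_mem (pow_mem hσ _) (mul_mem hσ (hG g hg)), ?_⟩
    rw [LinearEquiv.mul_apply, LinearEquiv.mul_apply, h, hp, sigma_pow hp hl, smul_smul, ← pow_succ,
      pow_add _ m 6, neg_ω_pow_six, mul_one]

/-- The abstract group extension used for `Q`. -/
lemma exists_ext {Γ : Type*} [Group Γ] (H : Subgroup Γ) (s : Γ) (hc : ∀ g ∈ H, s * g * s⁻¹ ∈ H)
    (h12 : s ^ 12 = 1) (hk : ∀ k : ℕ, s ^ k ∈ H → 12 ∣ k) :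
    ∃ ψ : Subgroup.closure ({s} ∪ (H : Set Γ)) →* Multiplicative (ZMod 12),
      Function.Surjective ψ ∧ ψ.ker = H.subgroupOf (Subgroup.closure ({s} ∪ (H : Set Γ))) := by
  have hs : s ∈ Subgroup.closure ({s} ∪ (H : Set Γ)) := Subgroup.subset_closure (Or.inl rfl)
  have hcn : ∀ n : ℕ, ∀ g ∈ H, s ^ n * g * (s ^ n)⁻¹ ∈ H := by
    intro n
    induction n with
    | zero => intro g hg; simpa using hg
    | succ n ih =>
      intro g hg
      have := hc _ (ih g hg)
      have e : s ^ (n + 1) * g * (s ^ (n + 1))⁻¹ = s * (s ^ n * g * (s ^ n)⁻¹) * s⁻¹ := by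
        rw [pow_succ']; group
      rwa [e]
  have hinv : s⁻¹ = s ^ 11 := inv_eq_of_mul_eq_one_right (by rw [← pow_succ', h12])
  have hci : ∀ n : ℕ, ∀ g ∈ H, (s ^ n)⁻¹ * g * s ^ n ∈ H := by
    intro n g hg
    have := hcn (11 * n) g hg
    rwa [pow_mul, ← hinv, inv_pow, inv_inv] at this
  have hform : ∀ q ∈ Subgroup.closure ({s} ∪ (H : Set Γ)), ∃ n : ℕ, ∃ h ∈ H, q = s ^ n * h := by
    intro q hq
    induction hq using Subgroup.closure_induction with
    | mem x hx =>
      rcases hx with hx | hx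
      · rw [Set.mem_singleton_iff] at hx
        exact ⟨1, 1, one_mem _, by simp [hx]⟩
      · exact ⟨0, x, hx, by simp⟩
    | one => exact ⟨0, 1, one_mem _, by simp⟩
    | mul x y _ _ hx hy =>
      obtain ⟨n, h, hh, rfl⟩ := hx
      obtain ⟨m, h', hh', rfl⟩ := hy
      refine ⟨n + m, ((s ^ m)⁻¹ * h * s ^ m) * h', mul_mem (hci m h hh) hh', ?_⟩
      rw [pow_add]; group
    | inv x _ hx =>
      obtain ⟨n, h, hh, rfl⟩ := hx
      refine ⟨11 * n, s ^ n * h⁻¹ * (s ^ n)⁻¹, hcn n _ (inv_mem hh), ?_⟩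
      rw [pow_mul, ← hinv, inv_pow]; group
  set K := Subgroup.closure ({s} ∪ (H : Set Γ)) with hK
  have hN : (H.subgroupOf K).Normal := by
    refine ⟨fun n hn g => ?_⟩
    rw [Subgroup.mem_subgroupOf] at hn ⊢
    obtain ⟨m, h, hh, e⟩ := hform g g.2
    have : ((g * n * g⁻¹ : K) : Γ) = s ^ m * (h * n * h⁻¹) * (s ^ m)⁻¹ := by
      push_cast; rw [e]; group
    rw [this]
    exact hcn _ _ (mul_mem (mul_mem hh hn) (inv_mem hh))
  let x : K ⧸ H.subgroupOf K := QuotientGroup.mk ⟨s, hs⟩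
  have hx : ∀ y, y ∈ Subgroup.zpowers x := by
    intro y
    obtain ⟨g, rfl⟩ := QuotientGroup.mk_surjective y
    obtain ⟨m, h, hh, e⟩ := hform g g.2
    refine ⟨m, ?_⟩
    change x ^ (m : ℤ) = _
    rw [zpow_natCast]
    change (QuotientGroup.mk ((⟨s, hs⟩ : K) ^ m) : K ⧸ H.subgroupOf K) = _
    rw [QuotientGroup.eq, Subgroup.mem_subgroupOf]
    push_cast
    rw [e, inv_mul_cancel_left]
    exact hh
  have ho : orderOf x = 12 := by
    have hiff : ∀ m : ℕ, x ^ m = 1 ↔ s ^ m ∈ H := by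
      intro m
      change (QuotientGroup.mk ((⟨s, hs⟩ : K) ^ m) : K ⧸ H.subgroupOf K) = 1 ↔ _
      rw [QuotientGroup.eq_one_iff, Subgroup.mem_subgroupOf]
      push_cast
      rfl
    refine Nat.dvd_antisymm (orderOf_dvd_of_pow_eq_one ((hiff 12).2 (by rw [h12]; exact one_mem _)))
      (hk _ ((hiff _).1 (pow_orderOf_eq_one x)))
  have hcard : Nat.card (K ⧸ H.subgroupOf K) = 12 := by
    rw [← ho, orderOf_eq_card_of_forall_mem_zpowers hx]
  let E := zmodMulEquivOfGenerator hx hcard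
  refine ⟨E.symm.toMonoidHom.comp (QuotientGroup.mk' _), ?_, ?_⟩
  · exact E.symm.surjective.comp (QuotientGroup.mk'_surjective _)
  · ext y
    rw [MonoidHom.mem_ker]
    change E.symm (QuotientGroup.mk' _ y) = 1 ↔ _
    rw [EmbeddingLike.map_eq_one_iff, QuotientGroup.mk'_apply, QuotientGroup.eq_one_iff]

/-- There is an automorphism `σ` of `L` of order 12 interchanging the point roots
and line roots of `D` along a polarity of `P²(𝔽₃)` (with `σ(x) = -ωl`, `σ(l) = x`
and `σ² = -ω`); conjugation by `σ` preserves `G ≅ PGL₃(𝔽₃)`, the group `Q = ⟨G, σ⟩`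
fits in an exact sequence `1 → PGL₃(𝔽₃) → Q → ℤ/12ℤ → 1`, and `Q` acts transitively
and faithfully on the unit multiples of the 26 roots of `D`. -/
theorem stmt12 : ∃ σ : V ≃ₗ[ℂ] V, SigmaSpec σ ∧ orderOf σ = 12 ∧
    (∀ v : V, σ (σ v) = (-ω) • v) ∧
    (∀ g ∈ Gsub, σ * g * σ⁻¹ ∈ Gsub) ∧
    Nonempty (Gsub ≃* PGL3F3) ∧
    (∃ ψ : QGroup σ →* Multiplicative (ZMod 12),
      Function.Surjective ψ ∧ ψ.ker = Gsub.subgroupOf (QGroup σ)) ∧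
    (∀ v ∈ UnitRoots, ∀ w ∈ UnitRoots, ∃ q ∈ QGroup σ, q v = w) ∧
    (∀ q ∈ QGroup σ, (∀ v ∈ UnitRoots, q v = v) → q = 1) := by
  obtain ⟨σ, hA, hp, hl⟩ := exists_sigma
  have hspec : SigmaSpec σ :=
    ⟨hA, δ, fun i j => by rw [adj_iff, adj_iff, inc_symm], hp, hl⟩
  refine ⟨σ, hspec, sigma_order hp hl, sigma_sq hp hl, fun g hg => sigma_conj hp hl hA hg,
    Gsub_iso, ?_, ?_, ?_⟩
  · exact exists_ext Gsub σ (fun g hg => sigma_conj hp hl hA hg) (sigma_pow_twelve hp hl)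
      (fun k hk => sigma_pow_mem hp hl hk)
  · intro v hv w hw
    obtain ⟨a, ha, hav⟩ := sigma_orbit hp hl hv
    obtain ⟨b, hb, hbw⟩ := sigma_orbit hp hl hw
    refine ⟨b * a⁻¹, mul_mem hb (inv_mem ha), ?_⟩
    rw [← hav, ← hbw, ← LinearEquiv.mul_apply, inv_mul_cancel_right]
  · intro q _ hq
    apply root_ext
    have h1 : ∀ r ∈ D26, q r = r := fun r hr => hq r ⟨1, Or.inl rfl, r, hr, (one_smul ℂ r).symm⟩
    rintro (i | j)
    · exact h1 (pt i) (Or.inl ⟨i, rfl⟩)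
    · exact h1 (lnr j) (Or.inr ⟨j, rfl⟩)

end Bimonster
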